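/- Let M, A, n ∈ ℕ with M ≥ 1 and n ≥ 2, and set r := M²(3A+1)+2A+M, N := n(n−1)/2, q := ⌈log₂(N+1)⌉, d := 4rM((2r+q)M+(6r+1)A+1), h := d+2, and m := n². Let G := G_{h,d,m}, let f be an (M,A)-quasi-isometry from G to a connected graph H, let x_0, …, x_N be the N+1 leftmost vertices at level q of the binary tree B(G), ordered left to right, and for i ∈ {1,…,N} set S_i := S(Δ(x_i)) ∪ {ℓ_i}, where ℓ_i is the unique leaf of B(G) joined by spines to S(Δ(x_i)); let U := S_1 ∪ … ∪ S_N. Then there are m pairwise disjoint paths P_1, …, P_m in H avoiding B_H(f(R(G)), Mq+A), each with one endvertex in f(S(G)) and one endvertex in f(T(G)), such that for every u ∈ U at most one of the paths P_1, …, P_m meets B_H(f(u), r). -/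

import Mathlib

open SimpleGraph

namespace CGT

/-- Distance between two vertex sets, as an extended natural number. -/
noncomputable def sDist {V : Type*} (G : SimpleGraph V) (U U' : Set V) : ℕ∞ :=
  ⨅ (u : U) (v : U'), G.edist u.1 v.1

/-- The ball of radius `r` around a vertex set `U`. -/
def gBall {V : Type*} (G : SimpleGraph V) (U : Set V) (r : ℕ) : Set V :=
  {v | ∃ u ∈ U, G.edist u v ≤ (r : ℕ∞)}

/-- A set of vertices is connected if the induced subgraph is connected. -/
def SetConn {V : Type*} (G : SimpleGraph V) (U : Set V) : Prop :=
  (G.induce U).Connected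

/-- The vertex set of a walk. -/
def walkSupp {V : Type*} {G : SimpleGraph V} {a b : V} (p : G.Walk a b) : Set V :=
  {v | v ∈ p.support}

/-- `X` separates `Y` and `Z` in `G`: every path with one end in `Y` and one in `Z`
contains a vertex of `X`. -/
def Separates {V : Type*} (G : SimpleGraph V) (X Y Z : Set V) : Prop :=
  ∀ ⦃y z : V⦄, y ∈ Y → z ∈ Z → ∀ p : G.Walk y z, p.IsPath → ∃ x ∈ X, x ∈ p.support

/-- `f` is an `(M,A)`-quasi-isometry from `G` to `H`.  The two-sided distance bound
`M⁻¹ d_G(u,v) - A ≤ d_H(f u, f v) ≤ M d_G(u,v) + A` is stated multiplied out over `ℕ∞`. -/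
structure IsQI {V V' : Type*} (M A : ℕ) (G : SimpleGraph V) (H : SimpleGraph V')
    (f : V → V') : Prop where
  upper : ∀ u v : V, H.edist (f u) (f v) ≤ (M : ℕ∞) * G.edist u v + (A : ℕ∞)
  lower : ∀ u v : V, G.edist u v ≤ (M : ℕ∞) * H.edist (f u) (f v) + (M : ℕ∞) * (A : ℕ∞)
  dense : ∀ w : V', ∃ v : V, H.edist w (f v) ≤ (A : ℕ∞)

/-- `G` is `(M,A)`-quasi-isometric to `H`. -/
def QIsometric {V V' : Type*} (M A : ℕ) (G : SimpleGraph V) (H : SimpleGraph V') : Prop :=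
  ∃ f : V → V', IsQI M A G H f

/-- `X` is a minor of `G`. -/
def HasMinor {V W : Type*} (G : SimpleGraph V) (X : SimpleGraph W) : Prop :=
  ∃ U : W → Set V,
    (∀ x, (U x).Nonempty) ∧ (∀ x, SetConn G (U x)) ∧
    (∀ ⦃x y⦄, x ≠ y → Disjoint (U x) (U y)) ∧
    ∀ ⦃x y⦄, X.Adj x y → ∃ u ∈ U x, ∃ v ∈ U y, G.Adj u v

/-- The `(a × b)`-grid graph. -/
def gridGraph (a b : ℕ) : SimpleGraph (Fin a × Fin b) :=
  SimpleGraph.fromRel (fun u v =>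
    (u.1 = v.1 ∧ u.2.1 + 1 = v.2.1) ∨ (u.2 = v.2 ∧ u.1.1 + 1 = v.1.1))

/-- A `K`-fat model of `X` in `G`: disjoint connected branch sets joined by internally
disjoint branch paths, all pairwise at distance at least `K` except for a branch path and
the branch sets of its endpoints. -/
structure FatModel {V W : Type*} (G : SimpleGraph V) (X : SimpleGraph W) (K : ℕ) where
  branch : W → Set V
  branch_nonempty : ∀ x, (branch x).Nonempty
  branch_connected : ∀ x, SetConn G (branch x)
  branch_disjoint : ∀ ⦃x y⦄, x ≠ y → Disjoint (branch x) (branch y)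
  pathEnd : ∀ ⦃x y⦄, X.Adj x y → V
  path : ∀ ⦃x y⦄ (e : X.Adj x y), G.Walk (pathEnd e) (pathEnd e.symm)
  path_isPath : ∀ ⦃x y⦄ (e : X.Adj x y), (path e).IsPath
  path_symm : ∀ ⦃x y⦄ (e : X.Adj x y), path e.symm = (path e).reverse
  pathEnd_mem : ∀ ⦃x y⦄ (e : X.Adj x y), pathEnd e ∈ branch x
  path_meets : ∀ ⦃x y⦄ (e : X.Adj x y) (z : W) (v : V), v ∈ (path e).support → v ∈ branch z →
    (z = x ∧ v = pathEnd e) ∨ (z = y ∧ v = pathEnd e.symm)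
  path_int_disjoint : ∀ ⦃x y x' y'⦄ (e : X.Adj x y) (e' : X.Adj x' y'), s(x, y) ≠ s(x', y') →
    ∀ v, v ∈ (path e).support → v ∈ (path e').support → v = pathEnd e' ∨ v = pathEnd e'.symm
  fat_branch : ∀ ⦃x y⦄, x ≠ y → (K : ℕ∞) ≤ sDist G (branch x) (branch y)
  fat_path_branch : ∀ ⦃x y⦄ (e : X.Adj x y) (z : W), z ≠ x → z ≠ y →
    (K : ℕ∞) ≤ sDist G (walkSupp (path e)) (branch z)
  fat_paths : ∀ ⦃x y x' y'⦄ (e : X.Adj x y) (e' : X.Adj x' y'), s(x, y) ≠ s(x', y') →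
    (K : ℕ∞) ≤ sDist G (walkSupp (path e)) (walkSupp (path e'))

/-- `X` is a `K`-fat minor of `G`. -/
def IsFatMinor {V W : Type*} (G : SimpleGraph V) (X : SimpleGraph W) (K : ℕ) : Prop :=
  Nonempty (FatModel G X K)

/-- `W` is a `K`-fat `n`-path-connected set in `G`. -/
def FatPathConn {V : Type*} (G : SimpleGraph V) (K n : ℕ) (W : Set V) : Prop :=
  (∃ S : Finset V, ↑S ⊆ W ∧ 2 * n ≤ S.card) ∧
  (∀ ⦃u v : V⦄, u ∈ W → v ∈ W → u ≠ v → (K : ℕ∞) ≤ G.edist u v) ∧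
  ∀ l : ℕ, l ≤ n → ∀ A B : Finset V, ↑A ⊆ W → ↑B ⊆ W → A.card = l → B.card = l →
    ∃ (a b : Fin l → V) (P : ∀ i : Fin l, G.Walk (a i) (b i)),
      (∀ i, (P i).IsPath) ∧ (∀ i, a i ∈ A ∧ b i ∈ B) ∧
      ∀ i j, i ≠ j → (K : ℕ∞) ≤ sDist G (walkSupp (P i)) (walkSupp (P j))

end CGT

namespace Ghdm

/-- Raw vertex codes for the graphs `G_{h,d,m}`:
`path k` is the `k`-th vertex of the base path; `tree j i p` is the vertex at position `p`
of the `i`-th binary tree at level `j` (the root being position `[]`); and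
`spine j i k t e s` is the `s`-th internal vertex of the spine from the `k`-th leaf of that
tree to the `e`-th element of the `t`-th local gluing set at level `j-1`. -/
inductive Raw : Type where
  | path (k : ℕ)
  | tree (j i : ℕ) (p : List Bool)
  | spine (j i k t e s : ℕ)
deriving DecidableEq

/-- `N = 2^{h+1} - 1`, the number of copies of `G_{h,d,m-1}` glued inside `G_{h,d,m}`. -/
def NN (h : ℕ) : ℕ := 2 ^ (h + 1) - 1

/-- Canonical representative of a raw vertex code: all tree roots are identified with the
single root `tree m 1 []`, and the leftmost leaf of tree `i > 1` is identified with the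
rightmost leaf of tree `i - 1` (consecutive copies are glued along these leaves). -/
def canon (h m : ℕ) : Raw → Raw
  | .tree j i p =>
    if p = [] then .tree m 1 []
    else if p = List.replicate h false ∧ 1 < i then .tree j (i - 1) (List.replicate h true)
    else .tree j i p
  | x => x

/-- The `q`-bit binary representation of `i` (most significant bit first);
`false` means "left". -/
def natToBits (q i : ℕ) : List Bool := (List.range q).map fun a => Nat.testBit i (q - 1 - a)

/-- Position of the `k`-th leaf (1-based, from the left) in a binary tree of height `h`. -/
def leafPos (h k : ℕ) : List Bool := natToBits h (k - 1)

/-- The `e`-th element of the `g`-th gluing set `V^{jv}_g` (at level `jv`):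
its element `e = 1` is an anchor of the base path, and its element `e ≥ 2` is a shared
extreme leaf of the trees at level `e`. -/
def VsetElem (h d jv g e : ℕ) : Raw :=
  if e = 1 then .path ((g - 1) * NN h ^ (jv - 1) * (d + 1))
  else if (g - 1) * NN h ^ (jv - e) = 0 then .tree e 1 (List.replicate h false)
  else .tree e ((g - 1) * NN h ^ (jv - e)) (List.replicate h true)

/-- Valid (canonical) vertex codes of `G_{h,d,m}`. -/
def Valid (h d m : ℕ) : Raw → Prop
  | .path k => k ≤ (d + 1) * NN h ^ (m - 1)
  | .tree j i p => 2 ≤ j ∧ j ≤ m ∧ 1 ≤ i ∧ i ≤ NN h ^ (m - j) ∧ p.length ≤ h ∧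
      (p = [] → j = m ∧ i = 1) ∧ (p = List.replicate h false → p ≠ [] → i = 1)
  | .spine j i k t e s => 2 ≤ j ∧ j ≤ m ∧ 1 ≤ i ∧ i ≤ NN h ^ (m - j) ∧
      1 ≤ k ∧ k ≤ 2 ^ h ∧ (t = 2 * k - 2 ∨ t = 2 * k + 1) ∧ 1 ≤ t ∧ t ≤ 2 ^ (h + 1) ∧
      1 ≤ e ∧ e ≤ j - 1 ∧ 1 ≤ s ∧ s ≤ d

/-- Generating adjacencies between raw vertex codes: consecutive base path vertices,
parent/child in the binary trees, consecutive spine vertices, a spine and the leaf it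
starts at, a spine and the gluing-set vertex it ends at (the latter collapsed to a single
edge when `d = 0`). -/
inductive rawAdj (h d : ℕ) : Raw → Raw → Prop
  | base (k : ℕ) : rawAdj h d (.path k) (.path (k + 1))
  | child (j i : ℕ) (p : List Bool) (b : Bool) : p.length < h →
      rawAdj h d (.tree j i p) (.tree j i (p ++ [b]))
  | step (j i k t e s : ℕ) : rawAdj h d (.spine j i k t e s) (.spine j i k t e (s + 1))
  | toLeaf (j i k t e : ℕ) : rawAdj h d (.tree j i (leafPos h k)) (.spine j i k t e 1)
  | toV (j i k t e : ℕ) :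
      rawAdj h d (.spine j i k t e d) (VsetElem h d (j - 1) ((i - 1) * NN h + t) e)
  | short (j i k t e : ℕ) : d = 0 → 1 ≤ k → k ≤ 2 ^ h → (t = 2 * k - 2 ∨ t = 2 * k + 1) →
      1 ≤ t → t ≤ 2 ^ (h + 1) → 1 ≤ e → e ≤ j - 1 →
      rawAdj h d (.tree j i (leafPos h k)) (VsetElem h d (j - 1) ((i - 1) * NN h + t) e)

/-- Adjacency of canonical representatives. -/
def rel (h d m : ℕ) (x y : Raw) : Prop :=
  ∃ a b, rawAdj h d a b ∧ x = canon h m a ∧ y = canon h m b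

/-- The vertex set of `G_{h,d,m}`. -/
def Verts (h d m : ℕ) : Set Raw := {x | Valid h d m x}

/-- The graph `G_{h,d,m}`. -/
def G (h d m : ℕ) : SimpleGraph (Verts h d m) :=
  (SimpleGraph.fromRel (rel h d m)).induce (Verts h d m)

/-- Lift a set of raw codes to a set of vertices of `G_{h,d,m}`. -/
def lift {h d m : ℕ} (S : Set Raw) : Set (Verts h d m) := Subtype.val ⁻¹' S

/-- The root `R(G_{h,d,m})`. -/
def RootR (m : ℕ) : Raw := .tree m 1 []

/-- The gluing set `V^{jv}_g` of `G_{h,d,m}`, as a set of raw codes. -/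
def VsetRaw (h d m jv g : ℕ) : Set Raw :=
  {x | ∃ e, 1 ≤ e ∧ e ≤ jv ∧ x = canon h m (VsetElem h d jv g e)}

/-- The set `S(G_{h,d,m})`. -/
def SsetR (h d m : ℕ) : Set Raw :=
  VsetRaw h d m (m - 1) 1 ∪ {canon h m (.tree m 1 (leafPos h 1))}

/-- The set `T(G_{h,d,m})`. -/
def TsetR (h d m : ℕ) : Set Raw :=
  VsetRaw h d m (m - 1) (2 ^ (h + 1)) ∪ {canon h m (.tree m 1 (leafPos h (2 ^ h)))}

/-- For a vertex of the top binary tree at position `p`, the (1-based) index of the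
leftmost leaf of the top tree below it. -/
def kOf (h : ℕ) (p : List Bool) : ℕ :=
  (p.foldl (fun a b => 2 * a + if b then 1 else 0) 0) * 2 ^ (h - p.length) + 1

/-- `S(Δ(x))` for the vertex `x` of the top binary tree `B(G_{h,d,m})` at position `p`. -/
def SDeltaR (h d m : ℕ) (p : List Bool) : Set Raw :=
  VsetRaw h d m (m - 1) (2 * kOf h p - 1) ∪ {canon h m (.tree m 1 (leafPos h (kOf h p)))}

/-- The leaf of `B(G_{h,d,m})` immediately to the left of the leftmost leaf below the
top-tree vertex at position `p`; it is the unique leaf joined by spines to `S(Δ(x))`. -/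
def leafLeftR (h m : ℕ) (p : List Bool) : Raw :=
  canon h m (.tree m 1 (leafPos h (kOf h p - 1)))

end Ghdm

/-!
Contract every ball `B_H(f(u), r)` with `u ∈ U` to a point. The vertices of `U` are deep in the
trees and far apart in `G`, so these balls are disjoint and miss the ball around the image of the
root. By Menger's theorem in the (finite part of the) contracted graph that carries the images of
the edges of `G`, it suffices that no set `Z` of fewer than `m` contracted vertices separates
`f(S(G))` from `f(T(G))` outside the root ball. Each point of `Z` pulls back into a ball of `G` of
radius `ρ = M (r + M + 2A)`, so what remains is a statement about `G` itself: fewer than `m` small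
connected obstacles, together with the first `ρ₀` levels of the trees, do not separate `S(G)` from
`T(G)`.

This goes by induction on `j`: if at most `j - 1` obstacles meet the part of `G` between two
gluing sets of level `j`, then these gluing sets are joined. If at most `j - 2` of the obstacles
meet the levels below `j`, the induction hypothesis applies. Otherwise all obstacles meet a lower
level, so the trees of level `j` and their spines are free away from the gluing sets. Then
either every copy of level `j - 1` meets at most `j - 2` obstacles, and one walks from leaf to leaf
through the copies, or one copy absorbs all obstacles, and one jumps over it through a leaf. For
counting, an obstacle that meets both sides of a gluing set must contain one of its vertices; this
is read off from labels (the nearest branch vertex) that are constant on small connected sets.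
-/

namespace CGT

section Avoiding

variable {W : Type*} {G G' : SimpleGraph W} {Z Z' A B : Set W} {a b c : W}

/-- `a` and `b` are joined by a walk of `G` no vertex of which lies in `Z`; in particular neither
end lies in `Z`. -/
def ReachableAvoiding (G : SimpleGraph W) (Z : Set W) (a b : W) : Prop :=
  ∃ p : G.Walk a b, ∀ v ∈ p.support, v ∉ Z

/-- Some vertex of `A` and some vertex of `B` are joined outside `Z`, i.e. `Z` does not separate
`A` from `B`. -/
def JoinedAvoiding (G : SimpleGraph W) (Z A B : Set W) : Prop :=
  ∃ a ∈ A, ∃ b ∈ B, ReachableAvoiding G Z a b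

/-- The vertices that can be reached from `A` outside `Z`. -/
def reachSet (G : SimpleGraph W) (Z A : Set W) : Set W :=
  {v | ∃ a ∈ A, ReachableAvoiding G Z a v}

namespace ReachableAvoiding

theorem refl (ha : a ∉ Z) : ReachableAvoiding G Z a a :=
  ⟨Walk.nil, by simpa using ha⟩

theorem symm (hab : ReachableAvoiding G Z a b) : ReachableAvoiding G Z b a := by
  obtain ⟨p, hp⟩ := hab
  exact ⟨p.reverse, fun v hv => hp v (by simpa using hv)⟩

theorem trans (hab : ReachableAvoiding G Z a b) (hbc : ReachableAvoiding G Z b c) :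
    ReachableAvoiding G Z a c := by
  obtain ⟨p, hp⟩ := hab
  obtain ⟨q, hq⟩ := hbc
  exact ⟨p.append q, fun v hv => ((Walk.mem_support_append_iff p q).1 hv).elim (hp v) (hq v)⟩

theorem left_notMem (hab : ReachableAvoiding G Z a b) : a ∉ Z := by
  obtain ⟨p, hp⟩ := hab
  exact hp a p.start_mem_support

theorem right_notMem (hab : ReachableAvoiding G Z a b) : b ∉ Z :=
  hab.symm.left_notMem

theorem of_adj (hab : G.Adj a b) (ha : a ∉ Z) (hb : b ∉ Z) : ReachableAvoiding G Z a b :=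
  ⟨hab.toWalk, by simp [ha, hb]⟩

theorem anti (hab : ReachableAvoiding G Z a b) (hZ : Z' ⊆ Z) : ReachableAvoiding G Z' a b := by
  obtain ⟨p, hp⟩ := hab
  exact ⟨p, fun v hv hvZ => hp v hv (hZ hvZ)⟩

theorem step (hab : ReachableAvoiding G Z a b) (hbc : G.Adj b c) (hc : c ∉ Z) :
    ReachableAvoiding G Z a c :=
  hab.trans (of_adj hbc hab.right_notMem hc)

theorem of_mem_support {v : W} {p : G.Walk a b} (hp : ∀ w ∈ p.support, w ∉ Z)
    (hv : v ∈ p.support) : ReachableAvoiding G Z a v := by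
  classical
  exact ⟨p.takeUntil v hv, fun w hw => hp w (p.support_takeUntil_subset_support hv hw)⟩

end ReachableAvoiding

theorem JoinedAvoiding.symm (hAB : JoinedAvoiding G Z A B) : JoinedAvoiding G Z B A := by
  obtain ⟨a, ha, b, hb, hab⟩ := hAB
  exact ⟨b, hb, a, ha, hab.symm⟩

theorem JoinedAvoiding.mono_left {A' : Set W} (hAB : JoinedAvoiding G Z A B) (hA : A ⊆ A') :
    JoinedAvoiding G Z A' B := by
  obtain ⟨a, ha, hb⟩ := hAB
  exact ⟨a, hA ha, hb⟩

theorem JoinedAvoiding.mono_right {B' : Set W} (hAB : JoinedAvoiding G Z A B) (hB : B ⊆ B') :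
    JoinedAvoiding G Z A B' :=
  (hAB.symm.mono_left hB).symm

theorem JoinedAvoiding.trans_singleton (hA : JoinedAvoiding G Z A {c})
    (hB : JoinedAvoiding G Z {c} B) : JoinedAvoiding G Z A B := by
  obtain ⟨a, ha, _, rfl, hac⟩ := hA
  obtain ⟨_, rfl, b, hb, hcb⟩ := hB
  exact ⟨a, ha, b, hb, hac.trans hcb⟩

theorem JoinedAvoiding.exists_adj_leaving_reachSet (hAB : JoinedAvoiding G Z A B) (hZ : Z' ⊆ Z)
    (hAB' : ¬ JoinedAvoiding G' Z' A B) :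
    ∃ u v, u ∉ Z ∧ v ∉ Z ∧ G.Adj u v ∧ ¬ G'.Adj u v ∧
      u ∈ reachSet G' Z' A ∧ v ∉ reachSet G' Z' A := by
  obtain ⟨a, ha, b, hb, p, hp⟩ := hAB
  have ha_reach : a ∈ reachSet G' Z' A :=
    ⟨a, ha, .refl fun haZ => hp a p.start_mem_support (hZ haZ)⟩
  have hb_reach : b ∉ reachSet G' Z' A := fun ⟨a', ha', hab⟩ => hAB' ⟨a', ha', b, hb, hab⟩
  obtain ⟨e, he, hfst, hsnd⟩ := p.exists_boundary_dart _ ha_reach hb_reach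
  have hsndZ := hp _ (p.dart_snd_mem_support_of_mem_darts he)
  refine ⟨e.fst, e.snd, hp _ (p.dart_fst_mem_support_of_mem_darts he), hsndZ, e.adj,
    fun hadj => hsnd ?_, hfst, hsnd⟩
  obtain ⟨a', ha', hreach⟩ := hfst
  exact ⟨a', ha', hreach.step hadj fun hmem => hsndZ (hZ hmem)⟩

end Avoiding

/-! ### Menger's theorem -/

section Menger

variable {W : Type*} {G G' : SimpleGraph W} {A B : Set W} {X P Q : Finset W} {x y : W} {k : ℕ}

/-- No set of fewer than `k` vertices separates `A` from `B`. -/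
def InseparableBelow (G : SimpleGraph W) (A B : Set W) (k : ℕ) : Prop :=
  ∀ Z : Finset W, Z.card < k → JoinedAvoiding G ↑Z A B

/-- There are `k` pairwise disjoint `A`–`B` paths; disjointness says that paths sharing a vertex
have the same index. -/
def HasDisjointPaths (G : SimpleGraph W) (A B : Set W) (k : ℕ) : Prop :=
  ∃ (a b : Fin k → W) (P : ∀ i : Fin k, G.Walk (a i) (b i)),
    (∀ i, (P i).IsPath) ∧ (∀ i, a i ∈ A ∧ b i ∈ B) ∧
    ∀ i j v, v ∈ (P i).support → v ∈ (P j).support → i = j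

/-- Pairwise disjoint paths from `A`, one to each vertex of `P`, indexed by their ends. -/
structure Fan (G : SimpleGraph W) (A : Set W) (P : Finset W) where
  source : P → W
  path : ∀ z : P, G.Walk (source z) z
  isPath : ∀ z, (path z).IsPath
  source_mem : ∀ z, source z ∈ A
  disjoint : ∀ ⦃z z' v⦄, v ∈ (path z).support → v ∈ (path z').support → z = z'

theorem InseparableBelow.symm (hAB : InseparableBelow G A B k) : InseparableBelow G B A k :=
  fun Z hZ => (hAB Z hZ).symm

theorem HasDisjointPaths.mono (hle : G' ≤ G) (hAB : HasDisjointPaths G' A B k) :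
    HasDisjointPaths G A B k := by
  obtain ⟨a, b, P, hP, hends, hdisj⟩ := hAB
  refine ⟨a, b, fun i => (P i).mapLe hle, fun i => by simpa using hP i, hends, ?_⟩
  simpa only [Walk.support_mapLe_eq_support] using hdisj

theorem HasDisjointPaths.nonempty_fan (hAP : HasDisjointPaths G A ↑P P.card) :
    Nonempty (Fan G A P) := by
  obtain ⟨a, b, Q, hQ, hends, hdisj⟩ := hAP
  let target : Fin P.card → P := fun i => ⟨b i, (hends i).2⟩
  have target_injective : Function.Injective target := by
    intro i j hij
    have hb : b i = b j := congrArg Subtype.val hij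
    exact hdisj i j (b i) (Walk.end_mem_support _) (by simp [hb])
  have target_bijective : Function.Bijective target :=
    (Fintype.bijective_iff_injective_and_card _).2 ⟨target_injective, by simp⟩
  choose σ hσ using target_bijective.2
  have hbσ : ∀ z : P, b (σ z) = z := fun z => congrArg Subtype.val (hσ z)
  refine ⟨⟨fun z => a (σ z), fun z => (Q (σ z)).copy rfl (hbσ z), fun z => by simpa using hQ (σ z),
    fun z => (hends _).1, fun z z' v hv hv' => ?_⟩⟩
  rw [Walk.support_copy] at hv hv'
  rw [← hσ z, ← hσ z', hdisj _ _ v hv hv']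

theorem Fan.eq_of_mem_support (F : Fan G A P) {z : P} {v : W} (hv : v ∈ (F.path z).support)
    (hvP : v ∈ P) : z = v :=
  congrArg Subtype.val (F.disjoint (z' := ⟨v, hvP⟩) hv (Walk.end_mem_support _))

theorem Fan.reachableAvoiding (F : Fan G A P) (hX : X ⊆ P) {z : P} {v : W}
    (hv : v ∈ (F.path z).support) (hvX : v ∉ X) : ReachableAvoiding G ↑X (F.source z) v := by
  classical
  refine ⟨(F.path z).takeUntil v hv, fun u hu huX => ?_⟩
  have hzu : z = u :=
    F.eq_of_mem_support ((F.path z).support_takeUntil_subset_support hv hu) (hX huX)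
  have hvz : v ≠ z := fun hvz => hvX (by rwa [hvz, hzu])
  exact Walk.endpoint_notMem_support_takeUntil (F.isPath z) hv hvz.symm (hzu ▸ hu)

theorem exists_isPath_support_subset_union {a b s t : W} (hle : G' ≤ G) (p : G'.Walk a s)
    (q : G'.Walk b t) (hst : s = t ∨ G.Adj s t) :
    ∃ w : G.Walk a b, w.IsPath ∧ ∀ v ∈ w.support, v ∈ p.support ∨ v ∈ q.support := by
  classical
  suffices ∃ w : G.Walk a b, ∀ v ∈ w.support, v ∈ p.support ∨ v ∈ q.support by
    obtain ⟨w, hw⟩ := this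
    exact ⟨w.bypass, w.bypass_isPath, fun v hv => hw v (w.support_bypass_subset_support hv)⟩
  rcases hst with rfl | hadj
  · refine ⟨(p.mapLe hle).append (q.mapLe hle).reverse, fun v hv => ?_⟩
    simpa using (Walk.mem_support_append_iff _ _).1 hv
  · refine ⟨(p.mapLe hle).append (Walk.cons hadj (q.mapLe hle).reverse), fun v hv => ?_⟩
    have hs := p.end_mem_support
    simp only [Walk.mem_support_append_iff, Walk.support_mapLe_eq_support, Walk.support_cons,
      Walk.support_reverse, List.mem_cons, List.mem_reverse] at hv
    rcases hv with hv | rfl | hv <;> tauto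

theorem Fan.hasDisjointPaths_of_matching (hle : G' ≤ G) (F : Fan G' A P) (F' : Fan G' B Q)
    {τ : P → Q} (hτ : Function.Injective τ) (hadj : ∀ z : P, z.1 = τ z ∨ G.Adj z (τ z))
    (hcross : ∀ z z' v, v ∈ (F.path z).support → v ∈ (F'.path z').support → z' = τ z) :
    HasDisjointPaths G A B P.card := by
  choose p hp hsupp using fun z =>
    exists_isPath_support_subset_union hle (F.path z) (F'.path (τ z)) (hadj z)
  let σ := P.equivFin.symm
  refine ⟨fun i => F.source (σ i), fun i => F'.source (τ (σ i)), fun i => p (σ i), fun i => hp _,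
    fun i => ⟨F.source_mem _, F'.source_mem _⟩, fun i j v hi hj => σ.injective ?_⟩
  rcases hsupp _ v hi with hi | hi <;> rcases hsupp _ v hj with hj | hj
  · exact F.disjoint hi hj
  · exact (hτ (hcross _ _ v hi hj)).symm
  · exact hτ (hcross _ _ v hj hi)
  · exact hτ (F'.disjoint hi hj)

theorem Fan.hasDisjointPaths_of_separator [DecidableEq W] (hle : G' ≤ G) (hxy : G.Adj x y)
    (hxX : x ∉ X) (hyX : y ∉ X) (hX : ¬ JoinedAvoiding G' ↑X A B) (F : Fan G' A (insert x X))
    (F' : Fan G' B (insert y X)) : HasDisjointPaths G A B (X.card + 1) := by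
  let τ : ↥(insert x X) → ↥(insert y X) := fun z =>
    if hz : z.1 ∈ X then ⟨z, Finset.mem_insert_of_mem hz⟩ else ⟨y, Finset.mem_insert_self _ _⟩
  have hτ_mem {z : ↥(insert x X)} (hz : z.1 ∈ X) : (τ z).1 = z := by simp [τ, hz]
  have hτ_notMem {z : ↥(insert x X)} (hz : z.1 ∉ X) : (τ z).1 = y := by simp [τ, hz]
  have eq_x (z : ↥(insert x X)) (hz : z.1 ∉ X) : z.1 = x :=
    (Finset.mem_insert.1 z.2).resolve_right hz
  rw [← Finset.card_insert_of_notMem hxX]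
  refine Fan.hasDisjointPaths_of_matching hle F F' (τ := τ) ?_ ?_ ?_
  · intro z z' hzz'
    have hval : (τ z).1 = τ z' := congrArg Subtype.val hzz'
    apply Subtype.ext
    by_cases hz : z.1 ∈ X <;> by_cases hz' : z'.1 ∈ X
    · rwa [hτ_mem hz, hτ_mem hz'] at hval
    · rw [hτ_mem hz, hτ_notMem hz'] at hval
      exact absurd (hval ▸ hz) hyX
    · rw [hτ_notMem hz, hτ_mem hz'] at hval
      exact absurd (hval ▸ hz') hyX
    · rw [eq_x z hz, eq_x z' hz']
  · intro z
    by_cases hz : z.1 ∈ X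
    · exact .inl (hτ_mem hz).symm
    · exact .inr (by rwa [hτ_notMem hz, eq_x z hz])
  · intro z z' v hv hv'
    have hvX : v ∈ X := by
      by_contra hvX
      exact hX ⟨_, F.source_mem z, _, F'.source_mem z',
        (F.reachableAvoiding (Finset.subset_insert x X) hv hvX).trans
          (F'.reachableAvoiding (Finset.subset_insert y X) hv' hvX).symm⟩
    have hzv := F.eq_of_mem_support hv (Finset.mem_insert_of_mem hvX)
    have hz'v := F'.eq_of_mem_support hv' (Finset.mem_insert_of_mem hvX)
    exact Subtype.ext (by rw [hτ_mem (hzv ▸ hvX), hzv, hz'v])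

theorem InseparableBelow.insert_separator [DecidableEq W] (hAB : InseparableBelow G A B k)
    (hdiff : ∀ u v, G.Adj u v → ¬ G'.Adj u v → s(u, v) = s(x, y))
    (hX : ¬ JoinedAvoiding G' ↑X A B) (hy : y ∉ reachSet G' ↑X A) :
    InseparableBelow G' A ↑(insert x X) k := by
  intro Z hZ
  by_contra hsep
  have reach_mono {a v : W} (ha : a ∈ A) (hav : ReachableAvoiding G' ↑Z a v) :
      ReachableAvoiding G' ↑X a v := by
    obtain ⟨p, hp⟩ := hav
    exact ⟨p, fun w hw hwX => hsep ⟨a, ha, w, by simp [Finset.mem_coe.1 hwX],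
      .of_mem_support hp hw⟩⟩
  have hZ_sep : ¬ JoinedAvoiding G' ↑Z A B := fun ⟨a, ha, b, hb, hab⟩ =>
    hX ⟨a, ha, b, hb, reach_mono ha hab⟩
  obtain ⟨u, v, -, -, huv, huv', ⟨a, ha, hau⟩, -⟩ :=
    (hAB Z hZ).exists_adj_leaving_reachSet subset_rfl hZ_sep
  rcases Sym2.eq_iff.1 (hdiff u v huv huv') with ⟨rfl, rfl⟩ | ⟨rfl, rfl⟩
  · exact hsep ⟨a, ha, u, by simp, hau⟩
  · exact hy ⟨a, ha, reach_mono ha hau⟩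

theorem InseparableBelow.le_card_add_one (hAB : InseparableBelow G A B k)
    (hdiff : ∀ u v, G.Adj u v → ¬ G'.Adj u v → s(u, v) = s(x, y))
    (hX : ¬ JoinedAvoiding G' ↑X A B) : k ≤ X.card + 1 := by
  classical
  by_contra! hlt
  have hcard := (Finset.card_insert_le x X).trans_lt hlt
  obtain ⟨u, v, hu, hv, huv, huv', -⟩ :=
    (hAB _ hcard).exists_adj_leaving_reachSet (by simp) hX
  rcases Sym2.eq_iff.1 (hdiff u v huv huv') with ⟨rfl, rfl⟩ | ⟨rfl, rfl⟩
  · simp at hu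
  · simp at hv

theorem hasDisjointPaths_bot (hAB : InseparableBelow (⊥ : SimpleGraph W) A B k) :
    HasDisjointPaths (⊥ : SimpleGraph W) A B k := by
  have hk : (k : ℕ∞) ≤ (A ∩ B).encard := by
    by_contra! hlt
    have hfin : (A ∩ B).Finite := Set.finite_of_encard_le_coe hlt.le
    rw [hfin.encard_eq_coe_toFinset_card, Nat.cast_lt] at hlt
    obtain ⟨a, ha, b, hb, p, hp⟩ := hAB _ hlt
    cases p with
    | nil => exact hp a (by simp) (by simp [ha, hb])
    | cons hadj _ => exact absurd hadj (by simp)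
  obtain ⟨Y, hY, hYk⟩ := Set.exists_subset_encard_eq hk
  have hYfin : Y.Finite := Set.finite_of_encard_eq_coe hYk
  rw [hYfin.encard_eq_coe_toFinset_card, Nat.cast_inj] at hYk
  let e := (hYfin.toFinset.equivFin.trans (finCongr hYk)).symm
  refine ⟨fun i => e i, fun i => e i, fun i => Walk.nil, fun i => Walk.IsPath.nil,
    fun i => hY (hYfin.mem_toFinset.1 (e i).2), fun i j v hi hj => ?_⟩
  simp only [Walk.support_nil, List.mem_singleton] at hi hj
  exact e.injective (Subtype.ext (hi.symm.trans hj))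

theorem hasDisjointPaths_of_deleteEdges {e : Sym2 W}
    (ih : ∀ A B : Set W, InseparableBelow (G.deleteEdges {e}) A B k →
      HasDisjointPaths (G.deleteEdges {e}) A B k)
    (hAB : InseparableBelow G A B k) : HasDisjointPaths G A B k := by
  classical
  have hle : G.deleteEdges {e} ≤ G := G.deleteEdges_le _
  by_cases hsep : InseparableBelow (G.deleteEdges {e}) A B k
  · exact (ih A B hsep).mono hle
  obtain ⟨X, hXk, hX⟩ : ∃ X : Finset W, X.card < k ∧
      ¬ JoinedAvoiding (G.deleteEdges {e}) ↑X A B := by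
    simpa only [InseparableBelow, not_forall, exists_prop] using hsep
  obtain ⟨x, y, hxX, hyX, hxy, hxy', hx, hy⟩ :=
    (hAB X hXk).exists_adj_leaving_reachSet subset_rfl hX
  have eq_e {u v} (huv : G.Adj u v) (huv' : ¬ (G.deleteEdges {e}).Adj u v) : s(u, v) = e := by
    simpa [deleteEdges_adj, huv] using huv'
  have hdiff u v (huv : G.Adj u v) (huv' : ¬ (G.deleteEdges {e}).Adj u v) :
      s(u, v) = s(x, y) := (eq_e huv huv').trans (eq_e hxy hxy').symm
  have hx_far : x ∉ reachSet (G.deleteEdges {e}) ↑X B := by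
    obtain ⟨a, ha, hax⟩ := hx
    exact fun ⟨b, hb, hbx⟩ => hX ⟨a, ha, b, hb, hax.trans hbx.symm⟩
  obtain rfl : k = X.card + 1 := (hAB.le_card_add_one hdiff hX).antisymm hXk
  have hA := ih A _ (hAB.insert_separator hdiff hX hy)
  have hB := ih B _ (hAB.symm.insert_separator (x := y) (y := x)
    (fun u v huv huv' => (hdiff u v huv huv').trans Sym2.eq_swap) (fun h => hX h.symm) hx_far)
  obtain ⟨F⟩ := HasDisjointPaths.nonempty_fan (P := insert x X)
    (by rwa [Finset.card_insert_of_notMem hxX])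
  obtain ⟨F'⟩ := HasDisjointPaths.nonempty_fan (P := insert y X)
    (by rwa [Finset.card_insert_of_notMem hyX])
  exact Fan.hasDisjointPaths_of_separator hle hxy hxX hyX hX F F'

theorem menger (hfin : G.edgeSet.Finite) (hAB : InseparableBelow G A B k) :
    HasDisjointPaths G A B k := by
  induction hn : G.edgeSet.ncard generalizing G A B with
  | zero =>
    obtain rfl : G = ⊥ := by simpa using (Set.ncard_eq_zero hfin).1 hn
    exact hasDisjointPaths_bot hAB
  | succ n ih =>
    obtain ⟨e, he⟩ : G.edgeSet.Nonempty := (Set.ncard_pos hfin).1 (by omega)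
    have hedges : (G.deleteEdges {e}).edgeSet = G.edgeSet \ {e} := edgeSet_deleteEdges _
    refine hasDisjointPaths_of_deleteEdges (e := e) (fun A B hAB' => ih ?_ hAB' ?_) hAB
    · exact hedges ▸ hfin.sdiff
    · rw [hedges, Set.ncard_sdiff_singleton_of_mem he, hn, Nat.add_sub_cancel]

end Menger

end CGT

namespace Ghdm

/-! ### The graph on vertex codes -/

section Edges

variable {h d m j i : ℕ} {p : List Bool} {x y : Raw}

/-- `G_{h,d,m}` as a graph on all vertex codes, the invalid ones being isolated. It lets walks be
handled without carrying validity proofs. -/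
def rawGraph (h d m : ℕ) : SimpleGraph Raw where
  Adj x y := Valid h d m x ∧ Valid h d m y ∧ x ≠ y ∧ (rel h d m x y ∨ rel h d m y x)
  symm := ⟨fun _ _ hxy => ⟨hxy.2.1, hxy.1, hxy.2.2.1.symm, hxy.2.2.2.symm⟩⟩
  loopless := ⟨fun _ hxx => hxx.2.2.1 rfl⟩

/-- The inclusion of `G_{h,d,m}` into the graph on vertex codes. -/
def toRawGraph (h d m : ℕ) : G h d m →g rawGraph h d m where
  toFun := Subtype.val
  map_rel' := by
    intro a b hab
    simp only [G, SimpleGraph.comap_adj, SimpleGraph.fromRel_adj] at hab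
    exact ⟨a.2, b.2, hab.1, hab.2⟩

/-- The relation `rel` with `canon` evaluated wherever that is possible when `h ≥ 2`. The edge
`rawAdj.short` is absent since it occurs for `d = 0` only. -/
inductive Edge (h d m : ℕ) : Raw → Raw → Prop
  | base (k : ℕ) : Edge h d m (.path k) (.path (k + 1))
  | root (j i : ℕ) (b : Bool) : Edge h d m (.tree m 1 []) (.tree j i [b])
  | child (j i : ℕ) (p : List Bool) (b : Bool) : p ≠ [] → p.length < h →
      Edge h d m (.tree j i p) (canon h m (.tree j i (p ++ [b])))
  | step (j i k t e s : ℕ) : Edge h d m (.spine j i k t e s) (.spine j i k t e (s + 1))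
  | toLeaf (j i k t e : ℕ) :
      Edge h d m (canon h m (.tree j i (leafPos h k))) (.spine j i k t e 1)
  | toV (j i k t e : ℕ) :
      Edge h d m (.spine j i k t e d) (VsetElem h d (j - 1) ((i - 1) * NN h + t) e)

theorem replicate_ne_nil (hh : 0 < h) (b : Bool) : List.replicate h b ≠ [] := by
  simpa using hh.ne'

theorem replicate_true_ne_false (hh : 0 < h) :
    List.replicate h true ≠ List.replicate h false := by
  simpa [List.replicate_right_inj] using hh.ne'

theorem length_natToBits (q i : ℕ) : (natToBits q i).length = q := by
  simp [natToBits]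

theorem length_leafPos (h k : ℕ) : (leafPos h k).length = h :=
  length_natToBits h (k - 1)

theorem leafPos_ne_nil (hh : 0 < h) (k : ℕ) : leafPos h k ≠ [] :=
  List.ne_nil_of_length_pos (by rwa [length_leafPos])

theorem leafPos_one (h : ℕ) : leafPos h 1 = List.replicate h false := by
  simp [leafPos, natToBits]

theorem leafPos_two_pow (h : ℕ) : leafPos h (2 ^ h) = List.replicate h true := by
  refine List.ext_getElem (by simp [length_leafPos]) fun i hi _ => ?_
  rw [length_leafPos] at hi
  simp only [leafPos, natToBits, List.getElem_map, List.getElem_range,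
    Nat.testBit_two_pow_sub_one, List.getElem_replicate, decide_eq_true_eq]
  omega

theorem canon_tree (j i : ℕ) (hp : p ≠ []) : canon h m (.tree j i p) =
    if p = List.replicate h false ∧ 1 < i then .tree j (i - 1) (List.replicate h true)
    else .tree j i p := by
  simp [canon, hp]

theorem canon_tree_of_length_lt (j i : ℕ) (hp : p ≠ []) (hlen : p.length < h) :
    canon h m (.tree j i p) = .tree j i p := by
  have hne : p ≠ List.replicate h false := fun hp' => by simp [hp'] at hlen
  simp [canon, hp, hne]

theorem canon_VsetElem (hh : 0 < h) (d jv g e : ℕ) :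
    canon h m (VsetElem h d jv g e) = VsetElem h d jv g e := by
  unfold VsetElem
  split_ifs
  · rfl
  · simp [canon, replicate_ne_nil hh]
  · simp [canon, replicate_ne_nil hh, replicate_true_ne_false hh]

theorem edge_of_rel (hh : 1 < h) (hd : 0 < d) (hxy : rel h d m x y) : Edge h d m x y := by
  obtain ⟨a, b, hab, rfl, rfl⟩ := hxy
  cases hab with
  | base k => exact .base k
  | child j i p b hp =>
    by_cases hnil : p = []
    · subst hnil
      rw [List.nil_append, canon_tree_of_length_lt j i (List.cons_ne_nil b []) hh]
      exact .root j i b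
    · rw [canon_tree_of_length_lt j i hnil hp]
      exact .child j i p b hnil hp
  | step j i k t e s => exact .step j i k t e s
  | toLeaf j i k t e => exact .toLeaf j i k t e
  | toV j i k t e =>
    rw [canon_VsetElem (by omega)]
    exact .toV j i k t e
  | short => omega

theorem edge_of_adj (hh : 1 < h) (hd : 0 < d) (hxy : (rawGraph h d m).Adj x y) :
    Edge h d m x y ∨ Edge h d m y x :=
  hxy.2.2.2.imp (edge_of_rel hh hd) (edge_of_rel hh hd)

end Edges

/-! ### Depth, level and span -/

section Span

variable {h d m j i jv g e : ℕ} {p : List Bool} {x y : Raw}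

/-- Depth of a vertex in its binary tree; vertices outside the trees count as deepest. -/
def depth (h : ℕ) : Raw → ℕ
  | .tree _ _ p => p.length
  | _ => h

/-- The `j` for which a vertex first occurs in `G_{h,d,j}`, the base path having level `1`. -/
def level : Raw → ℕ
  | .path _ => 1
  | .tree j _ _ => j
  | .spine j _ _ _ _ _ => j

/-- Left end of the part of the base path lying below a vertex, counted in segments of length
`d + 1`. The span of a vertex of the `i`-th copy of `G_{h,d,j}` is that of the copy, but the
extreme leaves, along which copies are glued, span a single point. -/
def spanLeft (h d : ℕ) : Raw → ℕ
  | .path k => k / (d + 1)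
  | .tree j i p =>
    if p = List.replicate h true then i * NN h ^ (j - 1) else (i - 1) * NN h ^ (j - 1)
  | .spine j i _ _ _ _ => (i - 1) * NN h ^ (j - 1)

/-- Right end of the part of the base path lying below a vertex, see `spanLeft`. -/
def spanRight (h d : ℕ) : Raw → ℕ
  | .path k => (k + d) / (d + 1)
  | .tree j i p =>
    if p = List.replicate h false then (i - 1) * NN h ^ (j - 1) else i * NN h ^ (j - 1)
  | .spine j i _ _ _ _ => i * NN h ^ (j - 1)

/-- The span of `y` is contained in that of `x`. -/
def SpanLE (h d : ℕ) (y x : Raw) : Prop :=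
  spanLeft h d x ≤ spanLeft h d y ∧ spanRight h d y ≤ spanRight h d x

theorem NN_add_one (h : ℕ) : NN h + 1 = 2 ^ (h + 1) :=
  Nat.sub_add_cancel Nat.one_le_two_pow

theorem NN_pos (h : ℕ) : 0 < NN h := by
  have := NN_add_one h
  have := Nat.pow_lt_pow_right (a := 2) (by omega) (Nat.succ_pos h)
  omega

theorem NN_pow_pos (h j : ℕ) : 0 < NN h ^ j :=
  Nat.pow_pos (NN_pos h)

theorem NN_pow_pred (hj : 2 ≤ j) : NN h ^ (j - 1) = NN h * NN h ^ (j - 1 - 1) := by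
  rw [← pow_succ', Nat.sub_add_cancel (by omega)]

theorem depth_canon_tree (hp : p ≠ []) :
    depth h (canon h m (.tree j i p)) = depth h (.tree j i p) := by
  rw [canon_tree _ _ hp]
  split_ifs with hif
  · simp [depth, hif.1]
  · rfl

theorem level_canon_tree (hp : p ≠ []) : level (canon h m (.tree j i p)) = j := by
  rw [canon_tree _ _ hp]
  split_ifs <;> rfl

theorem spanLeft_canon_tree (hh : 0 < h) (hp : p ≠ []) :
    spanLeft h d (canon h m (.tree j i p)) = spanLeft h d (.tree j i p) := by
  rw [canon_tree _ _ hp]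
  split_ifs with hif
  · simp [spanLeft, hif.1, (replicate_true_ne_false hh).symm]
  · rfl

theorem spanRight_canon_tree (hh : 0 < h) (hp : p ≠ []) :
    spanRight h d (canon h m (.tree j i p)) = spanRight h d (.tree j i p) := by
  rw [canon_tree _ _ hp]
  split_ifs with hif
  · simp [spanRight, hif.1, replicate_true_ne_false hh]
  · rfl

theorem depth_VsetElem : depth h (VsetElem h d jv g e) = h := by
  unfold VsetElem
  split_ifs <;> simp [depth]

theorem level_VsetElem : level (VsetElem h d jv g e) = e := by
  unfold VsetElem
  split_ifs with he <;> simp [level, he]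

theorem span_VsetElem (hh : 0 < h) (he : 1 ≤ e) (hej : e ≤ jv) :
    spanLeft h d (VsetElem h d jv g e) = (g - 1) * NN h ^ (jv - 1) ∧
    spanRight h d (VsetElem h d jv g e) = (g - 1) * NN h ^ (jv - 1) := by
  have hne := replicate_true_ne_false hh
  unfold VsetElem
  split_ifs with _ hzero
  · simp only [spanLeft, spanRight]
    constructor
    · exact Nat.mul_div_cancel _ (by omega)
    · rw [Nat.add_comm, Nat.add_mul_div_right _ _ (by omega), Nat.div_eq_of_lt (by omega),
        Nat.zero_add]
  · have hg : g - 1 = 0 := (Nat.mul_eq_zero.1 hzero).resolve_right (NN_pow_pos h _).ne'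
    simp [spanLeft, spanRight, hg, hne.symm]
  · have hpow : (g - 1) * NN h ^ (jv - e) * NN h ^ (e - 1) = (g - 1) * NN h ^ (jv - 1) := by
      rw [Nat.mul_assoc, ← pow_add]
      congr 2
      omega
    simp [spanLeft, spanRight, hne, hpow]

theorem spanLeft_le_spanRight (hh : 0 < h) (x : Raw) : spanLeft h d x ≤ spanRight h d x := by
  cases x with
  | path k => exact Nat.div_le_div_right (by omega)
  | spine j i k t e s => exact Nat.mul_le_mul_right _ (by omega)
  | tree j i p =>
    have hmul : (i - 1) * NN h ^ (j - 1) ≤ i * NN h ^ (j - 1) := Nat.mul_le_mul_right _ (by omega)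
    have hne := replicate_true_ne_false hh
    simp only [spanLeft, spanRight]
    split_ifs <;> simp_all

theorem Edge.depth_le (hh : 0 < h) (hxy : Edge h d m x y) :
    depth h x ≤ depth h y + 1 ∧ depth h y ≤ depth h x + 1 := by
  cases hxy with
  | base | step => simp [depth]
  | root => simp [depth]
  | child j i p b hp hlen =>
    rw [depth_canon_tree (by simp)]
    simp only [depth, List.length_append, List.length_singleton]
    omega
  | toLeaf =>
    rw [depth_canon_tree (leafPos_ne_nil hh _)]
    simp [depth, length_leafPos]
  | toV =>
    rw [depth_VsetElem]
    simp [depth]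

theorem spanLE_path_succ (d k : ℕ) :
    (spanLeft h d (.path k) ≠ spanRight h d (.path k) → SpanLE h d (.path (k + 1)) (.path k)) ∧
    (spanLeft h d (.path (k + 1)) ≠ spanRight h d (.path (k + 1)) →
      SpanLE h d (.path k) (.path (k + 1))) := by
  have hfloor : k / (d + 1) ≤ (k + 1) / (d + 1) := Nat.div_le_div_right (by omega)
  have hceil : (k + d) / (d + 1) ≤ (k + 1 + d) / (d + 1) := Nat.div_le_div_right (by omega)
  have hle : k / (d + 1) ≤ (k + d) / (d + 1) := Nat.div_le_div_right (by omega)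
  have hle' : (k + 1) / (d + 1) ≤ (k + 1 + d) / (d + 1) := Nat.div_le_div_right (by omega)
  have hsucc : (k + 1 + d) / (d + 1) = k / (d + 1) + 1 := by
    rw [show k + 1 + d = k + (d + 1) by ring, Nat.add_div_right _ (by omega)]
  simp only [SpanLE, spanLeft, spanRight]
  omega

theorem spanLE_tree (hh : 0 < h) {p' : List Bool}
    (hp : spanLeft h d (.tree j i p) ≠ spanRight h d (.tree j i p)) :
    SpanLE h d (.tree j i p') (.tree j i p) := by
  have hmul : (i - 1) * NN h ^ (j - 1) ≤ i * NN h ^ (j - 1) := Nat.mul_le_mul_right _ (by omega)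
  have hne := replicate_true_ne_false hh
  simp only [SpanLE, spanLeft, spanRight] at *
  split_ifs at * <;> simp_all

theorem spanLE_leaf_spine (hh : 0 < h) (k k' t e s : ℕ) :
    (spanLeft h d (.tree j i (leafPos h k)) ≠ spanRight h d (.tree j i (leafPos h k)) →
      SpanLE h d (.spine j i k' t e s) (.tree j i (leafPos h k))) ∧
    SpanLE h d (.tree j i (leafPos h k)) (.spine j i k' t e s) := by
  have hmul : (i - 1) * NN h ^ (j - 1) ≤ i * NN h ^ (j - 1) := Nat.mul_le_mul_right _ (by omega)
  have hne := replicate_true_ne_false hh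
  simp only [SpanLE, spanLeft, spanRight]
  split_ifs <;> simp_all

theorem spanLE_VsetElem_spine (hh : 0 < h) {k t s : ℕ} (hv : Valid h d m (.spine j i k t e s)) :
    SpanLE h d (VsetElem h d (j - 1) ((i - 1) * NN h + t) e) (.spine j i k t e s) := by
  obtain ⟨hj, -, hi, -, -, -, -, ht, ht', he, hej, -⟩ := hv
  obtain ⟨hleft, hright⟩ :=
    span_VsetElem (d := d) hh (g := (i - 1) * NN h + t) he hej
  have hN := NN_add_one h
  have hmul : i * NN h = (i - 1) * NN h + NN h := by
    rw [← Nat.succ_mul, Nat.succ_eq_add_one, Nat.sub_add_cancel hi]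
  rw [SpanLE, hleft, hright]
  simp only [spanLeft, spanRight]
  rw [NN_pow_pred hj, ← Nat.mul_assoc, ← Nat.mul_assoc]
  exact ⟨Nat.mul_le_mul_right _ (by omega), Nat.mul_le_mul_right _ (by omega)⟩

theorem Edge.spanLE (hh : 0 < h) (hx : Valid h d m x) (hx_pos : 0 < depth h x)
    (hxy : Edge h d m x y) :
    (spanLeft h d x ≠ spanRight h d x → SpanLE h d y x) ∧
    (spanLeft h d y ≠ spanRight h d y → SpanLE h d x y) := by
  cases hxy with
  | base k => exact spanLE_path_succ d k
  | root => simp [depth] at hx_pos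
  | child j i p b =>
    unfold SpanLE
    rw [spanLeft_canon_tree hh (by simp), spanRight_canon_tree hh (by simp)]
    exact ⟨fun hne => spanLE_tree hh hne, fun hne => spanLE_tree hh hne⟩
  | step => exact ⟨fun _ => ⟨le_rfl, le_rfl⟩, fun _ => ⟨le_rfl, le_rfl⟩⟩
  | toLeaf j i k t e =>
    have hnil := leafPos_ne_nil hh k
    unfold SpanLE
    rw [spanLeft_canon_tree hh hnil, spanRight_canon_tree hh hnil]
    obtain ⟨hspine, hleaf⟩ := spanLE_leaf_spine (d := d) (j := j) (i := i) hh k k t e 1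
    exact ⟨hspine, fun _ => hleaf⟩
  | toV j i k t e =>
    obtain ⟨hleft, hright⟩ := span_VsetElem (d := d) (g := (i - 1) * NN h + t) hh
      hx.2.2.2.2.2.2.2.2.2.1 hx.2.2.2.2.2.2.2.2.2.2.1
    exact ⟨fun _ => spanLE_VsetElem_spine hh hx, fun hne => absurd (hleft.trans hright.symm) hne⟩

theorem spanLE_of_adj (hh : 1 < h) (hd : 0 < d) (hxy : (rawGraph h d m).Adj x y)
    (hx_pos : 0 < depth h x) (hy_pos : 0 < depth h y)
    (hne : spanLeft h d x ≠ spanRight h d x) : SpanLE h d y x := by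
  rcases edge_of_adj hh hd hxy with hedge | hedge
  · exact (hedge.spanLE (by omega) hxy.1 hx_pos).1 hne
  · exact (hedge.spanLE (by omega) hxy.2.1 hy_pos).2 hne

/-- A walk that avoids the root can leave an interval only through a vertex of one-point span. -/
theorem exists_span_point_or_spanLE (hh : 1 < h) (hd : 0 < d) (w : (rawGraph h d m).Walk x y)
    (hroot : ∀ v ∈ w.support, 0 < depth h v) {a b : ℕ} (ha : a ≤ spanLeft h d x)
    (hb : spanRight h d x ≤ b) :
    (∃ z ∈ w.support, spanLeft h d z = spanRight h d z ∧ a ≤ spanLeft h d z ∧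
      spanRight h d z ≤ b) ∨ (a ≤ spanLeft h d y ∧ spanRight h d y ≤ b) := by
  induction w with
  | nil => exact .inr ⟨ha, hb⟩
  | @cons x y z hxy w ih =>
    by_cases hpoint : spanLeft h d x = spanRight h d x
    · exact .inl ⟨x, Walk.start_mem_support _, hpoint, ha, hb⟩
    have hmem {v} (hv : v ∈ w.support) : v ∈ (Walk.cons hxy w).support := by simp [hv]
    have hle := spanLE_of_adj hh hd hxy (hroot _ (Walk.start_mem_support _))
      (hroot _ (hmem w.start_mem_support)) hpoint
    rcases ih (fun v hv => hroot v (hmem hv)) (ha.trans hle.1) (hle.2.trans hb) with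
      ⟨v, hv, hspan⟩ | hspan
    · exact .inl ⟨v, hmem hv, hspan⟩
    · exact .inr hspan

theorem depth_le_add_length (hh : 1 < h) (hd : 0 < d) (w : (rawGraph h d m).Walk x y) :
    depth h x ≤ depth h y + w.length := by
  induction w with
  | nil => simp
  | @cons x y z hxy w ih =>
    have hstep : depth h x ≤ depth h y + 1 := by
      rcases edge_of_adj hh hd hxy with hedge | hedge
      · exact (hedge.depth_le (by omega)).1
      · exact (hedge.depth_le (by omega)).2
    rw [Walk.length_cons]
    omega

end Span

end Ghdm

namespace Ghdm

/-! ### Labels of vertices close to a branch vertex -/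

section Label

variable {h d m K j i jv g e : ℕ} {p : List Bool} {x y : Raw}

/-- Distance to the nearest branch vertex (a tree leaf or an anchor of the base path), capped at
`K`. On the base path, `(k + K) % (d + 1) = K` exactly at the anchors; the two truncated
differences add up to the absolute value. -/
def branchDist (h d K : ℕ) : Raw → ℕ
  | .path k => min K (((k + K) % (d + 1) - K) + (K - (k + K) % (d + 1)))
  | .tree _ _ p => min K (h - p.length)
  | .spine _ _ _ _ _ s => min K (min s (d + 1 - s))

/-- The label of a base path vertex is the number of the nearest anchor, that of a tree vertex is
its ancestor at depth `h - K`; the latter is normalised as in `canon`. -/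
def branchLabelCore (h d K : ℕ) : Raw → Raw
  | .path k => .path ((k + K) / (d + 1))
  | .tree j i p =>
    if p.take (h - K) = List.replicate (h - K) false ∧ 1 < i then
      .tree j (i - 1) (List.replicate (h - K) true)
    else .tree j i (p.take (h - K))
  | x => x

/-- A label that is constant on the vertices at distance less than `K` from a given branch vertex;
a spine vertex gets the label of the nearer end of its spine. -/
def branchLabel (h d K : ℕ) : Raw → Raw
  | .spine j i k t e s =>
    if s < K then branchLabelCore h d K (.tree j i (leafPos h k))
    else branchLabelCore h d K (VsetElem h d (j - 1) ((i - 1) * NN h + t) e)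
  | x => branchLabelCore h d K x

/-- The position on the base path, counted in segments, of the branch vertex of one-point span
with a given label. -/
def labelPos (h K : ℕ) : Raw → ℕ
  | .path k => k
  | .tree j i p =>
    if p = List.replicate (h - K) true then i * NN h ^ (j - 1) else (i - 1) * NN h ^ (j - 1)
  | .spine _ _ _ _ _ _ => 0

theorem branchLabel_path (k : ℕ) : branchLabel h d K (.path k) = .path ((k + K) / (d + 1)) :=
  rfl

theorem branchLabel_VsetElem : branchLabel h d K (VsetElem h d jv g e) =
    branchLabelCore h d K (VsetElem h d jv g e) := by
  unfold VsetElem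
  split_ifs <;> rfl

theorem branchDist_VsetElem (hKd : K ≤ d) : branchDist h d K (VsetElem h d jv g e) = 0 := by
  unfold VsetElem
  split_ifs
  · simp only [branchDist]
    rw [Nat.add_comm _ K, Nat.add_mul_mod_self_right, Nat.mod_eq_of_lt (by omega)]
    simp
  · simp [branchDist]
  · simp [branchDist]

theorem branchDist_canon_tree (hp : p ≠ []) :
    branchDist h d K (canon h m (.tree j i p)) = branchDist h d K (.tree j i p) := by
  rw [canon_tree _ _ hp]
  split_ifs with hif
  · simp [branchDist, hif.1]
  · rfl

theorem branchLabel_canon_tree (hKh : K < h) (hp : p ≠ []) :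
    branchLabel h d K (canon h m (.tree j i p)) = branchLabel h d K (.tree j i p) := by
  rw [canon_tree _ _ hp]
  split_ifs with hif
  · obtain ⟨rfl, hi⟩ := hif
    have hne := replicate_true_ne_false (show 0 < h - K by omega)
    have hmin : min (h - K) h = h - K := by omega
    simp only [branchLabel, branchLabelCore, List.take_replicate, hmin, hne, false_and, if_false,
      hi, and_self, if_true]
  · rfl

theorem mod_succ_cases (k d : ℕ) :
    ((k + 1) / (d + 1) = k / (d + 1) ∧ (k + 1) % (d + 1) = k % (d + 1) + 1) ∨
      (k % (d + 1) = d ∧ (k + 1) % (d + 1) = 0) := by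
  have hdm := Nat.mod_add_div k (d + 1)
  have hlt := Nat.mod_lt k (show 0 < d + 1 by omega)
  by_cases hmod : k % (d + 1) = d
  · refine .inr ⟨hmod, Nat.mod_eq_zero_of_dvd ⟨k / (d + 1) + 1, ?_⟩⟩
    rw [Nat.mul_add]
    omega
  · exact .inl ((Nat.div_mod_unique (show 0 < d + 1 by omega)).2 ⟨by omega, by omega⟩)

theorem Edge.branchDist_le (hKd : 2 * K ≤ d) (hd : 0 < d) (hKh : K < h) (hxy : Edge h d m x y) :
    branchDist h d K x ≤ branchDist h d K y + 1 ∧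
      branchDist h d K y ≤ branchDist h d K x + 1 := by
  cases hxy with
  | base k =>
    simp only [branchDist]
    rw [show k + 1 + K = k + K + 1 by ring]
    have := mod_succ_cases (k + K) d
    omega
  | root =>
    simp only [branchDist, List.length_nil, List.length_singleton]
    omega
  | child =>
    rw [branchDist_canon_tree (by simp)]
    simp only [branchDist, List.length_append, List.length_singleton]
    omega
  | step =>
    simp only [branchDist]
    omega
  | toLeaf =>
    rw [branchDist_canon_tree (leafPos_ne_nil (by omega) _)]
    simp only [branchDist, length_leafPos]
    omega
  | toV =>
    rw [branchDist_VsetElem (by omega)]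
    simp only [branchDist]
    omega

theorem Edge.branchLabel_eq (hKd : 2 * K ≤ d) (hKh : K < h) (hxy : Edge h d m x y)
    (hx : branchDist h d K x < K) (hy : branchDist h d K y < K) :
    branchLabel h d K x = branchLabel h d K y := by
  cases hxy with
  | base k =>
    simp only [branchDist, show k + 1 + K = k + K + 1 by ring] at hx hy
    rw [branchLabel_path, branchLabel_path, show k + 1 + K = k + K + 1 by ring, Raw.path.injEq]
    have := mod_succ_cases (k + K) d
    omega
  | root =>
    simp only [branchDist, List.length_nil] at hx
    omega
  | child j i p b hp hlen =>
    rw [branchDist_canon_tree (by simp)] at hy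
    rw [branchLabel_canon_tree hKh (by simp)]
    simp only [branchDist, branchLabel, branchLabelCore] at hx ⊢
    rw [List.take_append_of_le_length (by omega)]
  | step =>
    simp only [branchDist, branchLabel] at hx hy ⊢
    split_ifs <;> first | rfl | omega
  | toLeaf j i k t e =>
    rw [branchLabel_canon_tree hKh (leafPos_ne_nil (by omega) _)]
    simp only [branchDist, branchLabel] at hy ⊢
    rw [if_pos (by omega)]
  | toV =>
    rw [branchLabel_VsetElem]
    simp only [branchDist, branchLabel] at hx ⊢
    rw [if_neg (by omega)]

theorem branchLabel_eq_of_walk (hK : 0 < K) (hKd : 2 * K ≤ d) (hKh : K < h)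
    (w : (rawGraph h d m).Walk x y) (hw : branchDist h d K x + w.length < K) :
    branchLabel h d K x = branchLabel h d K y := by
  induction w with
  | nil => rfl
  | @cons x y z hxy w ih =>
    rw [Walk.length_cons] at hw
    rcases edge_of_adj (by omega) (by omega) hxy with hedge | hedge
    · have hle := hedge.branchDist_le hKd (by omega) hKh
      exact (hedge.branchLabel_eq hKd hKh (by omega) (by omega)).trans (ih (by omega))
    · have hle := hedge.branchDist_le hKd (by omega) hKh
      exact (hedge.branchLabel_eq hKd hKh (by omega) (by omega)).symm.trans (ih (by omega))

theorem level_branchLabelCore (x : Raw) : level (branchLabelCore h d K x) = level x := by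
  cases x with
  | path | spine => rfl
  | tree =>
    simp only [branchLabelCore]
    split_ifs <;> rfl

theorem level_branchLabel_le (hx : Valid h d m x) : level (branchLabel h d K x) ≤ level x := by
  cases x with
  | path k => exact (level_branchLabelCore (h := h) (.path k)).le
  | tree j i p => exact (level_branchLabelCore (d := d) (.tree j i p)).le
  | spine j i k t e s =>
    have hej : e ≤ j - 1 := hx.2.2.2.2.2.2.2.2.2.2.1
    simp only [branchLabel]
    split_ifs
    · exact (level_branchLabelCore _).le
    · rw [level_branchLabelCore, level_VsetElem]
      simp only [level]
      omega

theorem level_branchLabel (hK : 0 < K) (hv : Valid h d m x) (hx : branchDist h d K x = 0) :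
    level (branchLabel h d K x) = level x := by
  cases x with
  | path k => exact level_branchLabelCore (h := h) (.path k)
  | tree j i p => exact level_branchLabelCore (d := d) (.tree j i p)
  | spine j i k t e s =>
    obtain ⟨hs, hsd⟩ := hv.2.2.2.2.2.2.2.2.2.2.2
    simp only [branchDist] at hx
    omega

theorem mod_eq_zero_of_span_path {k : ℕ}
    (hk : spanLeft h d (.path k) = spanRight h d (.path k)) : k % (d + 1) = 0 := by
  simp only [spanLeft, spanRight] at hk
  have hdm := Nat.mod_add_div k (d + 1)
  by_contra hmod
  have : k / (d + 1) + 1 ≤ (k + d) / (d + 1) := by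
    rw [Nat.le_div_iff_mul_le (by omega), Nat.mul_comm, Nat.mul_add]
    omega
  omega

theorem tree_of_span_point (hh : 0 < h) (hv : Valid h d m (.tree j i p))
    (hspan : spanLeft h d (.tree j i p) = spanRight h d (.tree j i p)) :
    p = List.replicate h true ∨ p = List.replicate h false ∧ i = 1 := by
  obtain ⟨-, -, hi, -, -, -, hleft⟩ := hv
  by_cases hp : p = List.replicate h true
  · exact .inl hp
  · by_cases hp' : p = List.replicate h false
    · exact .inr ⟨hp', hleft hp' (hp' ▸ replicate_ne_nil hh _)⟩
    · simp only [spanLeft, spanRight, if_neg hp, if_neg hp'] at hspan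
      have := Nat.eq_of_mul_eq_mul_right (NN_pow_pos h (j - 1)) hspan
      omega

theorem label_of_span_point (hKd : K ≤ d) (hKh : K < h) (hv : Valid h d m x)
    (hx : spanLeft h d x = spanRight h d x) :
    branchDist h d K x = 0 ∧ labelPos h K (branchLabel h d K x) = spanLeft h d x ∧
      depth h x = h := by
  cases x with
  | path k =>
    obtain ⟨c, rfl⟩ := Nat.dvd_of_mod_eq_zero (mod_eq_zero_of_span_path hx)
    have hdiv : ((d + 1) * c + K) / (d + 1) = c := by
      rw [Nat.add_comm, Nat.add_mul_div_left _ _ (by omega), Nat.div_eq_of_lt (by omega),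
        Nat.zero_add]
    refine ⟨?_, ?_, rfl⟩
    · simp [branchDist, Nat.mod_eq_of_lt (show K < d + 1 by omega)]
    · simp [branchLabel_path, hdiv, labelPos, spanLeft]
  | spine j i k t e s =>
    have := Nat.eq_of_mul_eq_mul_right (NN_pow_pos h (j - 1)) hx
    have := hv.2.2.1
    omega
  | tree j i p =>
    have hne := replicate_true_ne_false (show 0 < h by omega)
    have hne' := replicate_true_ne_false (show 0 < h - K by omega)
    rcases tree_of_span_point (by omega) hv hx with rfl | ⟨rfl, rfl⟩
    · simp [branchDist, branchLabel, branchLabelCore, hne', labelPos, spanLeft, depth]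
    · simp [branchDist, branchLabel, branchLabelCore, hne'.symm, labelPos, spanLeft, depth,
        hne.symm]

/-- Any two vertices of `D` are joined within `D` by a walk of length at most `2 * ρ`, as in a
ball of radius `ρ`. -/
def IsSmall (h d m ρ : ℕ) (D : Set Raw) : Prop :=
  ∀ x ∈ D, ∀ y ∈ D, ∃ w : (rawGraph h d m).Walk x y, w.length ≤ 2 * ρ ∧ ∀ v ∈ w.support, v ∈ D

theorem IsSmall.branchLabel_eq {ρ : ℕ} {D : Set Raw} (hD : IsSmall h d m ρ D) (hρ : 2 * ρ < K)
    (hKd : 2 * K ≤ d) (hKh : K < h) (hx : x ∈ D) (hy : y ∈ D) (hbranch : branchDist h d K x = 0) :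
    branchLabel h d K x = branchLabel h d K y := by
  obtain ⟨w, hw, -⟩ := hD x hx y hy
  exact branchLabel_eq_of_walk (by omega) hKd hKh w (by omega)

theorem IsSmall.level_le {ρ : ℕ} {D : Set Raw} (hD : IsSmall h d m ρ D) (hρ : 2 * ρ < K)
    (hKd : 2 * K ≤ d) (hKh : K < h) (hv : ∀ x ∈ D, Valid h d m x) (hx : x ∈ D) (hy : y ∈ D)
    (hbranch : branchDist h d K x = 0) : level x ≤ level y := by
  rw [← level_branchLabel (by omega) (hv x hx) hbranch,
    hD.branchLabel_eq hρ hKd hKh hx hy hbranch]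
  exact level_branchLabel_le (hv y hy)

end Label

end Ghdm

/-! ### Leaves and gluing sets -/

namespace Ghdm

section Leaves

variable {h d m j g k l i t e s : ℕ} {v : Raw}

/-- The `k`-th leaf of the `g`-th binary tree at level `j`. -/
def leaf (h m j g k : ℕ) : Raw := canon h m (.tree j g (leafPos h k))

theorem canon_tree_ne_spine (p : List Bool) (j' g' : ℕ) :
    canon h m (.tree j g p) ≠ .spine j' g' k t e s := by
  simp only [canon]
  split_ifs <;> simp

theorem VsetElem_ne_spine (e' j' g' : ℕ) : VsetElem h d l g e' ≠ .spine j' g' k t e s := by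
  simp only [VsetElem]
  split_ifs <;> simp

theorem level_leaf (hh : 0 < h) : level (leaf h m j g k) = j :=
  level_canon_tree (leafPos_ne_nil hh _)

theorem depth_leaf (hh : 0 < h) : depth h (leaf h m j g k) = h :=
  (depth_canon_tree (leafPos_ne_nil hh _)).trans (length_leafPos h k)

theorem branchDist_leaf (hh : 0 < h) (K : ℕ) : branchDist h d K (leaf h m j g k) = 0 := by
  rw [leaf, branchDist_canon_tree (leafPos_ne_nil hh _)]
  simp [branchDist, length_leafPos]

theorem span_leaf (hh : 0 < h) : (g - 1) * NN h ^ (j - 1) ≤ spanLeft h d (leaf h m j g k) ∧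
    spanRight h d (leaf h m j g k) ≤ g * NN h ^ (j - 1) := by
  have hne := leafPos_ne_nil hh k
  have hle : (g - 1) * NN h ^ (j - 1) ≤ g * NN h ^ (j - 1) := Nat.mul_le_mul_right _ (by omega)
  rw [leaf, spanLeft_canon_tree hh hne, spanRight_canon_tree hh hne]
  simp only [spanLeft, spanRight]
  split_ifs <;> omega

theorem valid_leaf (hh : 0 < h) (hj : 2 ≤ j) (hjm : j ≤ m) (hg : 1 ≤ g)
    (hg' : g ≤ NN h ^ (m - j)) : Valid h d m (leaf h m j g k) := by
  have hne := leafPos_ne_nil hh k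
  rw [leaf, canon_tree _ _ hne]
  split_ifs with hleft
  · exact ⟨hj, hjm, by omega, by omega, by simp, fun hnil => absurd hnil (replicate_ne_nil hh _),
      fun heq => absurd heq (replicate_true_ne_false hh)⟩
  · refine ⟨hj, hjm, hg, hg', (length_leafPos h k).le, fun hnil => absurd hnil hne,
      fun heq _ => ?_⟩
    by_contra hg1
    exact hleft ⟨heq, by omega⟩

theorem leaf_two_pow (hh : 0 < h) (hg : 1 ≤ g) :
    leaf h m j g (2 ^ h) = leaf h m j (g + 1) 1 := by
  rw [leaf, leaf, leafPos_two_pow, leafPos_one, canon_tree _ _ (replicate_ne_nil hh _),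
    canon_tree _ _ (replicate_ne_nil hh _), if_neg fun hc => replicate_true_ne_false hh hc.1,
    if_pos ⟨rfl, by omega⟩, Nat.add_sub_cancel]

theorem VsetElem_self (hh : 0 < h) (hj : 2 ≤ j) (hg : 1 ≤ g) :
    VsetElem h d j g j = leaf h m j g 1 := by
  rw [leaf, VsetElem, leafPos_one, canon_tree _ _ (replicate_ne_nil hh _), if_neg (by omega)]
  simp only [Nat.sub_self, pow_zero, mul_one, true_and]
  by_cases hg1 : g = 1
  · simp [hg1]
  · rw [if_neg (by omega), if_pos (by omega)]

theorem VsetElem_succ (he : 1 ≤ e) (hel : e ≤ l) :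
    VsetElem h d (l + 1) g e = VsetElem h d l ((g - 1) * NN h + 1) e := by
  have hpow : ∀ c, c ≤ l →
      (g - 1) * NN h ^ (l + 1 - c) = ((g - 1) * NN h + 1 - 1) * NN h ^ (l - c) := by
    intro c hc
    rw [Nat.add_sub_cancel, Nat.succ_sub hc, pow_succ]
    ring
  rw [VsetElem, VsetElem, hpow 1 (by omega), hpow e hel]

theorem VsetRaw_eq_image (hh : 0 < h) :
    VsetRaw h d m l g = VsetElem h d l g '' Set.Icc 1 l := by
  ext x
  simp only [VsetRaw, canon_VsetElem hh, Set.mem_ofPred_eq, Set.mem_image, Set.mem_Icc, and_assoc,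
    eq_comm]

theorem VsetRaw_succ (hh : 0 < h) (hl : 1 ≤ l) (hg : 1 ≤ g) :
    VsetRaw h d m (l + 1) g =
      VsetRaw h d m l ((g - 1) * NN h + 1) ∪ {leaf h m (l + 1) g 1} := by
  rw [VsetRaw_eq_image hh, VsetRaw_eq_image hh, ← VsetElem_self (d := d) hh (by omega) hg,
    ← Set.image_congr fun e he => VsetElem_succ he.1 he.2, ← Set.image_singleton,
    ← Set.image_union]
  congr 1
  ext e
  simp only [Set.mem_Icc, Set.mem_union, Set.mem_singleton_iff]
  omega

theorem VsetRaw_subset_SsetR (hh : 0 < h) (hm : 2 ≤ m) :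
    VsetRaw h d m m 1 ⊆ SsetR h d m := by
  obtain ⟨l, rfl⟩ : ∃ l, m = l + 1 := ⟨m - 1, by omega⟩
  rw [VsetRaw_succ hh (by omega) le_rfl, Nat.sub_self, Nat.zero_mul]
  rfl

theorem VsetRaw_subset_TsetR (hh : 0 < h) (hm : 2 ≤ m) :
    VsetRaw h d m m 2 ⊆ TsetR h d m := by
  obtain ⟨l, rfl⟩ : ∃ l, m = l + 1 := ⟨m - 1, by omega⟩
  rw [VsetRaw_succ hh (by omega) (by omega), ← leaf_two_pow hh le_rfl,
    show (2 - 1) * NN h + 1 = 2 ^ (h + 1) by rw [← NN_add_one h]; omega]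
  rfl

theorem adj_path_succ (hk : Valid h d m (.path (k + 1))) :
    (rawGraph h d m).Adj (.path k) (.path (k + 1)) :=
  ⟨(Nat.le_succ k).trans hk, hk, by simp, .inl ⟨_, _, .base k, rfl, rfl⟩⟩

theorem adj_spine_succ (hs : Valid h d m (.spine j i k t e s))
    (hs' : Valid h d m (.spine j i k t e (s + 1))) :
    (rawGraph h d m).Adj (.spine j i k t e s) (.spine j i k t e (s + 1)) :=
  ⟨hs, hs', by simp, .inl ⟨_, _, .step j i k t e s, rfl, rfl⟩⟩

theorem adj_leaf_spine (hleaf : Valid h d m (leaf h m j i k))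
    (hs : Valid h d m (.spine j i k t e 1)) :
    (rawGraph h d m).Adj (leaf h m j i k) (.spine j i k t e 1) :=
  ⟨hleaf, hs, canon_tree_ne_spine _ _ _, .inl ⟨_, _, .toLeaf j i k t e, rfl, rfl⟩⟩

theorem adj_spine_VsetElem (hh : 0 < h) (hs : Valid h d m (.spine j i k t e d))
    (hV : Valid h d m (VsetElem h d (j - 1) ((i - 1) * NN h + t) e)) :
    (rawGraph h d m).Adj (.spine j i k t e d) (VsetElem h d (j - 1) ((i - 1) * NN h + t) e) :=
  ⟨hs, hV, (VsetElem_ne_spine _ _ _).symm,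
    .inl ⟨_, _, .toV j i k t e, rfl, (canon_VsetElem hh _ _ _ _).symm⟩⟩

theorem Edge.eq_of_spine_left (hxy : Edge h d m (.spine j i k t e s) v) :
    v = .spine j i k t e (s + 1) ∨ v = VsetElem h d (j - 1) ((i - 1) * NN h + t) e := by
  generalize hu : Raw.spine j i k t e s = u at hxy
  cases hxy with
  | base | root | child => cases hu
  | step =>
    cases hu
    exact .inl rfl
  | toLeaf => exact absurd hu.symm (canon_tree_ne_spine _ _ _)
  | toV =>
    cases hu
    exact .inr rfl

theorem Edge.eq_of_spine_right (hxy : Edge h d m v (.spine j i k t e s)) :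
    (∃ s', v = .spine j i k t e s') ∨ v = leaf h m j i k := by
  generalize hu : Raw.spine j i k t e s = u at hxy
  cases hxy with
  | base | root => cases hu
  | child => exact absurd hu.symm (canon_tree_ne_spine _ _ _)
  | step =>
    cases hu
    exact .inl ⟨_, rfl⟩
  | toLeaf =>
    cases hu
    exact .inr rfl
  | toV => exact absurd hu.symm (VsetElem_ne_spine _ _ _)

theorem eq_of_adj_spine (hh : 1 < h) (hd : 0 < d)
    (hadj : (rawGraph h d m).Adj (.spine j i k t e s) v) :
    (∃ s', v = .spine j i k t e s') ∨ v = leaf h m j i k ∨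
      v = VsetElem h d (j - 1) ((i - 1) * NN h + t) e := by
  rcases edge_of_adj hh hd hadj with hedge | hedge
  · exact hedge.eq_of_spine_left.imp (fun hs => ⟨_, hs⟩) .inr
  · exact hedge.eq_of_spine_right.imp_right .inl

end Leaves

end Ghdm

/-! ### Few small obstacles do not separate -/

namespace Ghdm

open CGT

section Obstacles

variable {h d m ρ ρ₀ l a b c : ℕ} {ι : Type*} {B : ι → Set Raw} {i : ι} {x y : Raw}

/-- A family of obstacles `B i` in `G_{h,d,m}`, each of which is small compared with the length
of the spines and with the depth `ρ₀`, below which walks are supposed to stay. -/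
structure ObstacleSystem (h d m ρ ρ₀ : ℕ) {ι : Type*} (B : ι → Set Raw) : Prop where
  spine_long : 4 * ρ + 2 ≤ d
  two_mul_lt : 2 * ρ < ρ₀
  lt_height : ρ₀ < h
  isSmall : ∀ i, IsSmall h d m ρ (B i)
  valid : ∀ i, ∀ x ∈ B i, Valid h d m x

/-- The codes that a walk must avoid: those that are not vertices, those of depth at most `ρ₀`,
and those in an obstacle. -/
def forbidden (h d m ρ₀ : ℕ) {ι : Type*} (B : ι → Set Raw) : Set Raw :=
  {x | ¬ (Valid h d m x ∧ ρ₀ < depth h x ∧ ∀ i, x ∉ B i)}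

/-- The vertices of depth more than `ρ₀` and level at most `l` that lie between the gluing sets
`V^l_a` and `V^l_b`. -/
def region (h d m ρ₀ l a b : ℕ) : Set Raw :=
  {x | Valid h d m x ∧ ρ₀ < depth h x ∧ level x ≤ l ∧ (a - 1) * NN h ^ (l - 1) ≤ spanLeft h d x ∧
    spanRight h d x ≤ (b - 1) * NN h ^ (l - 1)}

open Classical in
/-- The (indices of) obstacles that meet the region between `V^l_a` and `V^l_b`. -/
noncomputable def hitting (h d m ρ₀ : ℕ) {ι : Type*} [Fintype ι] (B : ι → Set Raw) (l a b : ℕ) :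
    Finset ι :=
  {i | (B i ∩ region h d m ρ₀ l a b).Nonempty}

theorem mem_hitting [Fintype ι] :
    i ∈ hitting h d m ρ₀ B l a b ↔ ∃ x ∈ B i, x ∈ region h d m ρ₀ l a b := by
  classical
  simp only [hitting, Finset.mem_filter_univ]
  rfl

theorem notMem_forbidden :
    x ∉ forbidden h d m ρ₀ B ↔ Valid h d m x ∧ ρ₀ < depth h x ∧ ∀ i, x ∉ B i :=
  not_not

theorem region_subset_region {a' b' : ℕ} (ha : a' ≤ a) (hb : b ≤ b') :
    region h d m ρ₀ l a b ⊆ region h d m ρ₀ l a' b' :=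
  fun _ ⟨hv, hdepth, hlevel, hleft, hright⟩ =>
    ⟨hv, hdepth, hlevel, le_trans (Nat.mul_le_mul_right _ (by omega)) hleft,
      hright.trans (Nat.mul_le_mul_right _ (by omega))⟩

theorem region_subset_region_succ (hl : 1 ≤ l) :
    region h d m ρ₀ l ((a - 1) * NN h + 1) ((b - 1) * NN h + 1) ⊆
      region h d m ρ₀ (l + 1) a b := by
  rintro x ⟨hv, hdepth, hlevel, hleft, hright⟩
  rw [Nat.add_sub_cancel, Nat.mul_assoc] at hleft hright
  rw [region, NN_pow_pred (by omega)]
  exact ⟨hv, hdepth, by omega, hleft, hright⟩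

theorem hitting_mono [Fintype ι] {l' a' b' : ℕ}
    (hsub : region h d m ρ₀ l a b ⊆ region h d m ρ₀ l' a' b') :
    hitting h d m ρ₀ B l a b ⊆ hitting h d m ρ₀ B l' a' b' := by
  intro i hi
  obtain ⟨x, hx, hxr⟩ := mem_hitting.1 hi
  exact mem_hitting.2 ⟨x, hx, hsub hxr⟩

namespace ObstacleSystem

theorem one_lt_height (hB : ObstacleSystem h d m ρ ρ₀ B) : 1 < h := by
  have := hB.two_mul_lt
  have := hB.lt_height
  omega

theorem spine_pos (hB : ObstacleSystem h d m ρ ρ₀ B) : 0 < d := by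
  have := hB.spine_long
  omega

theorem branchLabel_eq (hB : ObstacleSystem h d m ρ ρ₀ B) (hx : x ∈ B i) (hy : y ∈ B i)
    (hbranch : branchDist h d (2 * ρ + 1) x = 0) :
    branchLabel h d (2 * ρ + 1) x = branchLabel h d (2 * ρ + 1) y :=
  (hB.isSmall i).branchLabel_eq (by omega) (by linarith [hB.spine_long])
    (by linarith [hB.two_mul_lt, hB.lt_height]) hx hy hbranch

theorem level_le (hB : ObstacleSystem h d m ρ ρ₀ B) (hx : x ∈ B i) (hy : y ∈ B i)
    (hbranch : branchDist h d (2 * ρ + 1) x = 0) : level x ≤ level y :=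
  (hB.isSmall i).level_le (by omega) (by linarith [hB.spine_long])
    (by linarith [hB.two_mul_lt, hB.lt_height]) (hB.valid i) hx hy hbranch

theorem label_of_span_point (hB : ObstacleSystem h d m ρ ρ₀ B) (hx : x ∈ B i)
    (hspan : spanLeft h d x = spanRight h d x) :
    branchDist h d (2 * ρ + 1) x = 0 ∧
      labelPos h (2 * ρ + 1) (branchLabel h d (2 * ρ + 1) x) = spanLeft h d x ∧ depth h x = h :=
  Ghdm.label_of_span_point (by linarith [hB.spine_long])
    (by linarith [hB.two_mul_lt, hB.lt_height]) (hB.valid i x hx) hspan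

theorem depth_pos (hB : ObstacleSystem h d m ρ ρ₀ B) (hx : x ∈ B i) (hdepth : ρ₀ < depth h x)
    (hy : y ∈ B i) : 0 < depth h y := by
  obtain ⟨w, hw, -⟩ := hB.isSmall i x hx y hy
  have := depth_le_add_length hB.one_lt_height hB.spine_pos w
  have := hB.two_mul_lt
  omega

theorem exists_span_eq (hB : ObstacleSystem h d m ρ ρ₀ B) (hx : x ∈ B i) (hy : y ∈ B i)
    (hdepth : ρ₀ < depth h x) {b b' : ℕ} (hxb : spanRight h d x ≤ b) (hyb : b' ≤ spanLeft h d y)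
    (hbb' : b ≤ b') :
    b = b' ∧ ∃ z ∈ B i, spanLeft h d z = b ∧ spanRight h d z = b ∧ level z ≤ level x ∧
      depth h z = h := by
  have hspan := fun v => spanLeft_le_spanRight (d := d) (zero_lt_one.trans hB.one_lt_height) v
  have hpoint : ∀ z ∈ B i, spanLeft h d z = spanRight h d z →
      level z ≤ level x ∧ depth h z = h := fun z hz hzp =>
    have hlabel := hB.label_of_span_point hz hzp
    ⟨hB.level_le hz hx hlabel.1, hlabel.2.2⟩
  have hx' := hspan x
  have hy' := hspan y
  obtain ⟨w, -, hwB⟩ := hB.isSmall i x hx y hy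
  have hroot : ∀ v ∈ w.support, 0 < depth h v := fun v hv => hB.depth_pos hx hdepth (hwB v hv)
  rcases exists_span_point_or_spanLE hB.one_lt_height hB.spine_pos w hroot (Nat.zero_le _) hxb with
    ⟨z, hz, hzp, -, hzb⟩ | ⟨-, hy_le⟩
  · rcases exists_span_point_or_spanLE hB.one_lt_height hB.spine_pos w.reverse
      (by simpa using hroot) hyb le_rfl with ⟨z', hz', hzp', hzb', -⟩ | ⟨hx_ge, -⟩
    · have hzB := hwB z hz
      have hzB' := hwB z' (by simpa using hz')
      obtain ⟨hbranch, hpos, -⟩ := hB.label_of_span_point hzB hzp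
      obtain ⟨-, hpos', -⟩ := hB.label_of_span_point hzB' hzp'
      rw [hB.branchLabel_eq hzB hzB' hbranch, hpos'] at hpos
      exact ⟨by omega, z, hzB, by omega, by omega, hpoint z hzB hzp⟩
    · exact ⟨by omega, x, hx, by omega, by omega, hpoint x hx (by omega)⟩
  · exact ⟨by omega, y, hy, by omega, by omega, hpoint y hy (by omega)⟩

theorem disjoint_hitting [Fintype ι] (hB : ObstacleSystem h d m ρ ρ₀ B) {a' b' : ℕ} (hb : 1 ≤ b)
    (hba' : b < a') :
    Disjoint (hitting h d m ρ₀ B l a b) (hitting h d m ρ₀ B l a' b') := by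
  refine Finset.disjoint_left.2 fun i hi hi' => ?_
  obtain ⟨x, hx, -, hdepth, -, -, hxb⟩ := mem_hitting.1 hi
  obtain ⟨y, hy, -, -, -, hya', -⟩ := mem_hitting.1 hi'
  have hlt : (b - 1) * NN h ^ (l - 1) < (a' - 1) * NN h ^ (l - 1) :=
    Nat.mul_lt_mul_of_pos_right (by omega) (NN_pow_pos h _)
  exact hlt.ne (hB.exists_span_eq hx hy hdepth hxb hya' hlt.le).1

theorem hitting_inter_subset [Fintype ι] [DecidableEq ι] (hB : ObstacleSystem h d m ρ ρ₀ B)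
    {c' : ℕ} (hbc' : b ≤ c') :
    hitting h d m ρ₀ B l a b ∩ hitting h d m ρ₀ B l b c ⊆ hitting h d m ρ₀ B l b c' := by
  intro i hi
  obtain ⟨hi, hi'⟩ := Finset.mem_inter.1 hi
  obtain ⟨x, hx, -, hdepth, hlevel, -, hxb⟩ := mem_hitting.1 hi
  obtain ⟨y, hy, -, -, -, hyb, -⟩ := mem_hitting.1 hi'
  obtain ⟨-, z, hz, hzl, hzr, hzlevel, hzdepth⟩ := hB.exists_span_eq hx hy hdepth hxb hyb le_rfl
  exact mem_hitting.2 ⟨z, hz, hB.valid i z hz, hB.lt_height.trans_eq hzdepth.symm,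
    hzlevel.trans hlevel, hzl.ge, hzr.le.trans (Nat.mul_le_mul_right _ (by omega))⟩

theorem VsetElem_mem_of_spine_mem (hB : ObstacleSystem h d m ρ ρ₀ B) {j g k t e s : ℕ}
    (hx : .spine j g k t e s ∈ B i) (hy : y ∈ B i) (hlevel : level y < j) :
    VsetElem h d (j - 1) ((g - 1) * NN h + t) e ∈ B i := by
  obtain ⟨w, -, hw⟩ := hB.isSmall i _ hx y hy
  obtain ⟨e', he', ⟨s', hs'⟩, hsnd⟩ :=
    w.exists_boundary_dart {x | ∃ s', x = .spine j g k t e s'} ⟨s, rfl⟩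
      (by rintro ⟨s', rfl⟩; exact hlevel.false)
  have hsndB := hw _ (w.dart_snd_mem_support_of_mem_darts he')
  rcases eq_of_adj_spine hB.one_lt_height hB.spine_pos (hs' ▸ e'.adj) with hs | hs | hs
  · exact absurd hs hsnd
  · have hh := zero_lt_one.trans hB.one_lt_height
    rw [hs] at hsndB
    have := hB.level_le hsndB hy (branchDist_leaf hh _)
    rw [level_leaf hh] at this
    omega
  · exact hs ▸ hsndB

end ObstacleSystem

end Obstacles

end Ghdm

namespace Ghdm

open CGT

section Spines

variable {h d m l g k g₀ g₁ : ℕ} {Z : Set Raw}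

/-- Outside `Z`, every leaf of the `g`-th tree at level `l + 1` can be left along its spines to
every vertex outside `Z` of the two gluing sets `V^l` that the leaf is attached to. -/
structure SpinesOpen (h d m : ℕ) (Z : Set Raw) (l g : ℕ) : Prop where
  leaf_notMem : ∀ k, leaf h m (l + 1) g k ∉ Z
  reachable_left : ∀ k, 1 < k → k ≤ 2 ^ h →
    ∀ x ∈ VsetRaw h d m l ((g - 1) * NN h + (2 * k - 2)), x ∉ Z →
      ReachableAvoiding (rawGraph h d m) Z (leaf h m (l + 1) g k) x
  reachable_right : ∀ k, 1 ≤ k → k < 2 ^ h →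
    ∀ x ∈ VsetRaw h d m l ((g - 1) * NN h + (2 * k + 1)), x ∉ Z →
      ReachableAvoiding (rawGraph h d m) Z (leaf h m (l + 1) g k) x

namespace SpinesOpen

theorem joined_leaf (hopen : SpinesOpen h d m Z l g) (hk : 1 < k) (hk' : k ≤ 2 ^ h) {X : Set Raw}
    (hX : JoinedAvoiding (rawGraph h d m) Z X
      (VsetRaw h d m l ((g - 1) * NN h + (2 * k - 2)))) :
    JoinedAvoiding (rawGraph h d m) Z X {leaf h m (l + 1) g k} := by
  obtain ⟨x, hx, y, hy, hxy⟩ := hX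
  exact ⟨x, hx, _, rfl, hxy.trans (hopen.reachable_left k hk hk' y hy hxy.right_notMem).symm⟩

theorem leaf_joined (hopen : SpinesOpen h d m Z l g) (hk : 1 ≤ k) (hk' : k < 2 ^ h) {Y : Set Raw}
    (hY : JoinedAvoiding (rawGraph h d m) Z (VsetRaw h d m l ((g - 1) * NN h + (2 * k + 1))) Y) :
    JoinedAvoiding (rawGraph h d m) Z {leaf h m (l + 1) g k} Y := by
  obtain ⟨x, hx, y, hy, hxy⟩ := hY
  exact ⟨_, rfl, y, hy, (hopen.reachable_right k hk hk' x hx hxy.left_notMem).trans hxy⟩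

/-- Leaf `k + 1` is attached to the left end of the copy between the two leaves and leaf `k` to
its right end, so the walk crosses this copy from right to left. -/
theorem reachable_leaf_succ (hopen : SpinesOpen h d m Z l g) (hk : 1 ≤ k) (hk' : k < 2 ^ h)
    (hcopy : JoinedAvoiding (rawGraph h d m) Z (VsetRaw h d m l ((g - 1) * NN h + 2 * k))
      (VsetRaw h d m l ((g - 1) * NN h + (2 * k + 1)))) :
    ReachableAvoiding (rawGraph h d m) Z (leaf h m (l + 1) g k) (leaf h m (l + 1) g (k + 1)) := by
  obtain ⟨_, rfl, _, rfl, hleaf⟩ := hopen.joined_leaf (k := k + 1) (by omega) hk'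
    (hopen.leaf_joined hk hk' hcopy.symm)
  exact hleaf

theorem reachable_leaf_one (hopen : SpinesOpen h d m Z l g) (hk : 1 ≤ k) (hk' : k ≤ 2 ^ h)
    (hcopy : ∀ c, 1 ≤ c → c < NN h → JoinedAvoiding (rawGraph h d m) Z
      (VsetRaw h d m l ((g - 1) * NN h + c)) (VsetRaw h d m l ((g - 1) * NN h + (c + 1)))) :
    ReachableAvoiding (rawGraph h d m) Z (leaf h m (l + 1) g 1) (leaf h m (l + 1) g k) := by
  induction k, hk using Nat.le_induction with
  | base => exact .refl (hopen.leaf_notMem 1)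
  | succ k hk ih =>
    have hNN := NN_add_one h
    rw [pow_succ] at hNN
    exact (ih (by omega)).trans
      (hopen.reachable_leaf_succ hk hk' (hcopy (2 * k) (by omega) (by omega)))

end SpinesOpen

theorem first_add_NN_le {a b : ℕ} (ha : 1 ≤ a) (hab : a < b) :
    (a - 1) * NN h + NN h ≤ (b - 1) * NN h :=
  calc (a - 1) * NN h + NN h = a * NN h := by rw [← Nat.add_one_mul, Nat.sub_add_cancel ha]
    _ ≤ (b - 1) * NN h := Nat.mul_le_mul_right _ (by omega)

theorem joined_gluing_leaf (hh : 0 < h) (hl : 1 ≤ l) (hg₀ : 1 ≤ g₀)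
    (hopen : ∀ g, g₀ ≤ g → g < g₁ → SpinesOpen h d m Z l g) (hg : g₀ ≤ g) (hg' : g < g₁)
    (hk : 1 ≤ k) (hk' : k ≤ 2 ^ h)
    (hleft : ∀ b, (g₀ - 1) * NN h + 1 < b → b ≤ (g - 1) * NN h + 2 * k - 2 →
      JoinedAvoiding (rawGraph h d m) Z (VsetRaw h d m l ((g₀ - 1) * NN h + 1))
        (VsetRaw h d m l b)) :
    JoinedAvoiding (rawGraph h d m) Z (VsetRaw h d m (l + 1) g₀) {leaf h m (l + 1) g k} := by
  have hsub := (VsetRaw_succ (d := d) (m := m) hh hl hg₀).ge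
  have hle : (g₀ - 1) * NN h ≤ (g - 1) * NN h := Nat.mul_le_mul_right _ (by omega)
  rcases hk.lt_or_eq with hk | rfl
  · exact ((hopen g hg hg').joined_leaf hk hk' (hleft _ (by omega) (by omega))).mono_left
      (Set.subset_union_left.trans hsub)
  rcases hg.eq_or_lt with rfl | hg
  · exact ⟨_, hsub (.inr rfl), _, rfl, .refl ((hopen _ le_rfl hg').leaf_notMem 1)⟩
  · have hNN := NN_add_one h
    have hpow : 2 ≤ 2 ^ h := Nat.le_self_pow hh.ne' 2
    have hstep := first_add_NN_le (h := h) (a := g₀) (b := g) hg₀ hg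
    have hstep' := first_add_NN_le (h := h) (a := g - 1) (b := g) (by omega) (by omega)
    have hstep'' : (g₀ - 1) * NN h ≤ (g - 1 - 1) * NN h := Nat.mul_le_mul_right _ (by omega)
    rw [pow_succ] at hNN
    rw [← Nat.sub_add_cancel (show 1 ≤ g by omega), ← leaf_two_pow hh (by omega)]
    exact ((hopen (g - 1) (by omega) (by omega)).joined_leaf (by omega) le_rfl
      (hleft _ (by omega) (by omega))).mono_left (Set.subset_union_left.trans hsub)

theorem joined_leaf_gluing (hh : 0 < h) (hl : 1 ≤ l) (hg₀ : 1 ≤ g₀)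
    (hopen : ∀ g, g₀ ≤ g → g < g₁ → SpinesOpen h d m Z l g) (hg : g₀ ≤ g) (hg' : g < g₁)
    (hk : 1 ≤ k) (hk' : k ≤ 2 ^ h)
    (hright : ∀ a, (g - 1) * NN h + 2 * k + 1 ≤ a → a < (g₁ - 1) * NN h + 1 →
      JoinedAvoiding (rawGraph h d m) Z (VsetRaw h d m l a)
        (VsetRaw h d m l ((g₁ - 1) * NN h + 1))) :
    JoinedAvoiding (rawGraph h d m) Z {leaf h m (l + 1) g k} (VsetRaw h d m (l + 1) g₁) := by
  have hsub := (VsetRaw_succ (d := d) (m := m) hh hl (show 1 ≤ g₁ by omega)).ge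
  have hNN := NN_add_one h
  have hpow : 2 ≤ 2 ^ h := Nat.le_self_pow hh.ne' 2
  rw [pow_succ] at hNN
  have hstep := first_add_NN_le (h := h) (a := g) (b := g₁) (by omega) hg'
  rcases hk'.lt_or_eq with hk' | rfl
  · exact ((hopen g hg hg').leaf_joined hk hk' (hright _ (by omega) (by omega))).mono_right
      (Set.subset_union_left.trans hsub)
  rcases (Nat.succ_le_of_lt hg').eq_or_lt with rfl | hg'
  · have hleaf := (hopen g hg hg').leaf_notMem (2 ^ h)
    rw [leaf_two_pow hh (by omega)] at hleaf ⊢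
    exact ⟨_, rfl, _, hsub (.inr rfl), .refl hleaf⟩
  · have hstep' := first_add_NN_le (h := h) (a := g) (b := g + 1) (by omega) (by omega)
    have hstep'' := first_add_NN_le (h := h) (a := g + 1) (b := g₁) (by omega) hg'
    rw [leaf_two_pow hh (by omega)]
    exact ((hopen (g + 1) (by omega) hg').leaf_joined le_rfl (by omega)
      (hright _ (by omega) (by omega))).mono_right (Set.subset_union_left.trans hsub)

theorem joined_of_copies_joined (hh : 0 < h) (hl : 1 ≤ l) (hg₀ : 1 ≤ g₀) (hlt : g₀ < g₁)
    (hopen : ∀ g, g₀ ≤ g → g < g₁ → SpinesOpen h d m Z l g)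
    (hcopy : ∀ c, (g₀ - 1) * NN h + 1 ≤ c → c < (g₁ - 1) * NN h + 1 →
      JoinedAvoiding (rawGraph h d m) Z (VsetRaw h d m l c) (VsetRaw h d m l (c + 1))) :
    JoinedAvoiding (rawGraph h d m) Z (VsetRaw h d m (l + 1) g₀) (VsetRaw h d m (l + 1) g₁) := by
  have htree : ∀ g, g₀ ≤ g → g < g₁ → ReachableAvoiding (rawGraph h d m) Z
      (leaf h m (l + 1) g 1) (leaf h m (l + 1) (g + 1) 1) := by
    intro g hg hg'
    have hle : (g₀ - 1) * NN h ≤ (g - 1) * NN h := Nat.mul_le_mul_right _ (by omega)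
    have hle' := first_add_NN_le (h := h) (a := g) (b := g₁) (by omega) hg'
    rw [← leaf_two_pow hh (by omega)]
    exact (hopen g hg hg').reachable_leaf_one Nat.one_le_two_pow le_rfl
      fun c hc hc' => hcopy _ (by omega) (by omega)
  have hchain : ∀ g, g₀ ≤ g → g ≤ g₁ → ReachableAvoiding (rawGraph h d m) Z
      (leaf h m (l + 1) g₀ 1) (leaf h m (l + 1) g 1) := by
    intro g hg
    induction g, hg using Nat.le_induction with
    | base => exact fun _ => .refl ((hopen g₀ le_rfl hlt).leaf_notMem 1)
    | succ g hg ih => exact fun hg' => (ih (by omega)).trans (htree g hg hg')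
  exact ⟨_, (VsetRaw_succ hh hl hg₀).ge (.inr rfl),
    _, (VsetRaw_succ hh hl (by omega)).ge (.inr rfl), hchain g₁ hlt.le le_rfl⟩

theorem exists_leaf_over_copy {P : ℕ → Prop} {c : ℕ}
    (hc : (g₀ - 1) * NN h + 1 ≤ c) (hc' : c < (g₁ - 1) * NN h + 1) (hP : P c) :
    ∃ g k c, g₀ ≤ g ∧ g < g₁ ∧ 1 ≤ k ∧ k ≤ 2 ^ h ∧
      ((g₀ - 1) * NN h + 1 ≤ c ∧ c < (g₁ - 1) * NN h + 1) ∧ P c ∧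
      (c = (g - 1) * NN h + 2 * k - 1 ∨ c = (g - 1) * NN h + 2 * k ∧ ¬ P (c + 1)) := by
  have hNN := NN_add_one h
  rw [pow_succ] at hNN
  obtain ⟨g, z, hz, hgz⟩ : ∃ g z, z < NN h ∧ c = g * NN h + z + 1 :=
    ⟨(c - 1) / NN h, (c - 1) % NN h, Nat.mod_lt _ (NN_pos h), by
      rw [Nat.div_add_mod']; omega⟩
  have hg₀ : g₀ - 1 < g + 1 := by
    by_contra! hcon
    have := Nat.mul_le_mul_right (NN h) hcon
    rw [Nat.succ_mul] at this
    omega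
  have hg₁ : g < g₁ - 1 := by
    by_contra! hcon
    have := Nat.mul_le_mul_right (NN h) hcon
    omega
  have hbound := Nat.mul_le_mul_right (NN h) (Nat.succ_le_of_lt hg₁)
  rw [Nat.succ_mul] at hbound
  rcases Nat.even_or_odd' z with ⟨y, rfl | rfl⟩
  · exact ⟨g + 1, y + 1, c, by omega, by omega, by omega, by omega, ⟨hc, hc'⟩, hP,
      .inl (by rw [Nat.add_sub_cancel]; omega)⟩
  by_cases hP' : P (c + 1)
  · exact ⟨g + 1, y + 2, c + 1, by omega, by omega, by omega, by omega, by omega, hP',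
      .inl (by rw [Nat.add_sub_cancel]; omega)⟩
  · exact ⟨g + 1, y + 1, c, by omega, by omega, by omega, by omega, ⟨hc, hc'⟩, hP,
      .inr ⟨by rw [Nat.add_sub_cancel]; omega, hP'⟩⟩

end Spines

end Ghdm

namespace Ghdm

open CGT

section Induction

variable {h d m ρ ρ₀ l c g g₀ g₁ : ℕ} {ι : Type*} [Fintype ι] {B : ι → Set Raw}

/-- The induction hypothesis at level `l`: fewer than `l` obstacles between two gluing sets `V^l`
do not separate these two sets. -/
def GluingSetsJoined (h d m ρ₀ : ℕ) (B : ι → Set Raw) (l : ℕ) : Prop :=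
  ∀ g₀ g₁, 1 ≤ g₀ → g₀ < g₁ → g₁ ≤ NN h ^ (m - l) + 1 → (hitting h d m ρ₀ B l g₀ g₁).card < l →
    JoinedAvoiding (rawGraph h d m) (forbidden h d m ρ₀ B) (VsetRaw h d m l g₀)
      (VsetRaw h d m l g₁)

theorem path_mem_region_one {k : ℕ} (hdepth : ρ₀ < h) (hv : Valid h d m (.path k))
    (hleft : (g₀ - 1) * (d + 1) ≤ k) (hright : k ≤ (g₁ - 1) * (d + 1)) :
    .path k ∈ region h d m ρ₀ 1 g₀ g₁ := by
  refine ⟨hv, hdepth, le_rfl, ?_, ?_⟩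
  · rw [Nat.sub_self, pow_zero, mul_one, spanLeft, Nat.le_div_iff_mul_le (by omega)]
    exact hleft
  · rw [Nat.sub_self, pow_zero, mul_one, spanRight, ← Nat.lt_add_one_iff,
      Nat.div_lt_iff_lt_mul (by omega), Nat.add_one_mul]
    omega

namespace ObstacleSystem

theorem gluingSetsJoined_one (hB : ObstacleSystem h d m ρ ρ₀ B) :
    GluingSetsJoined h d m ρ₀ B 1 := by
  intro g₀ g₁ _ hlt hg₁ hcard
  have hempty : hitting h d m ρ₀ B 1 g₀ g₁ = ∅ := Finset.card_eq_zero.1 (by omega)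
  have hvalid : ∀ k ≤ (g₁ - 1) * (d + 1), Valid h d m (.path k) := fun k hk => by
    rw [Valid, Nat.mul_comm]
    exact hk.trans (Nat.mul_le_mul_right _ (by omega))
  have hfree : ∀ k, (g₀ - 1) * (d + 1) ≤ k → k ≤ (g₁ - 1) * (d + 1) →
      .path k ∉ forbidden h d m ρ₀ B := by
    refine fun k hk hk' => notMem_forbidden.2 ⟨hvalid k hk', hB.lt_height, fun i hi => ?_⟩
    have hmem := mem_hitting.2 ⟨_, hi, path_mem_region_one hB.lt_height (hvalid k hk') hk hk'⟩
    simp [hempty] at hmem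
  have hwalk : ∀ k, (g₀ - 1) * (d + 1) ≤ k → k ≤ (g₁ - 1) * (d + 1) →
      ReachableAvoiding (rawGraph h d m) (forbidden h d m ρ₀ B)
        (.path ((g₀ - 1) * (d + 1))) (.path k) := by
    intro k hk
    induction k, hk using Nat.le_induction with
    | base => exact fun hk' => .refl (hfree _ le_rfl hk')
    | succ k hk ih => exact fun hk' =>
        (ih (by omega)).step (adj_path_succ (hvalid _ hk')) (hfree _ (by omega) hk')
  have hanchor : ∀ g, .path ((g - 1) * (d + 1)) ∈ VsetRaw h d m 1 g := fun g =>
    ⟨1, le_rfl, le_rfl, by simp [VsetElem, canon]⟩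
  have hle : (g₀ - 1) * (d + 1) ≤ (g₁ - 1) * (d + 1) := Nat.mul_le_mul_right _ (by omega)
  exact ⟨_, hanchor g₀, _, hanchor g₁, hwalk _ hle le_rfl⟩

theorem leaf_notMem_forbidden (hB : ObstacleSystem h d m ρ ρ₀ B) (hl : 1 ≤ l) (hlm : l + 1 ≤ m)
    (hg : 1 ≤ g) (hg' : g ≤ NN h ^ (m - (l + 1)))
    (hlow : ∀ i ∈ hitting h d m ρ₀ B (l + 1) g (g + 1), ∃ y ∈ B i, level y ≤ l) (k : ℕ) :
    leaf h m (l + 1) g k ∉ forbidden h d m ρ₀ B := by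
  have hh := zero_lt_one.trans hB.one_lt_height
  have hv : Valid h d m (leaf h m (l + 1) g k) := valid_leaf hh (by omega) hlm hg hg'
  have hdepth : ρ₀ < depth h (leaf h m (l + 1) g k) := hB.lt_height.trans_eq (depth_leaf hh).symm
  refine notMem_forbidden.2 ⟨hv, hdepth, fun i hi => ?_⟩
  obtain ⟨y, hy, hly⟩ := hlow i (mem_hitting.2
    ⟨_, hi, hv, hdepth, (level_leaf hh).le, (span_leaf hh).1, (span_leaf hh).2⟩)
  have := hB.level_le hi hy (branchDist_leaf hh _)
  rw [level_leaf hh] at this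
  omega

theorem reachable_leaf_VsetElem (hB : ObstacleSystem h d m ρ ρ₀ B) {k t e : ℕ}
    (hspine : ∀ s, 1 ≤ s → s ≤ d → Valid h d m (.spine (l + 1) g k t e s))
    (hlow : ∀ i ∈ hitting h d m ρ₀ B (l + 1) g (g + 1), ∃ y ∈ B i, level y ≤ l)
    (hleaf : leaf h m (l + 1) g k ∉ forbidden h d m ρ₀ B)
    (hV : VsetElem h d l ((g - 1) * NN h + t) e ∉ forbidden h d m ρ₀ B) :
    ReachableAvoiding (rawGraph h d m) (forbidden h d m ρ₀ B) (leaf h m (l + 1) g k)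
      (VsetElem h d l ((g - 1) * NN h + t) e) := by
  have hfree : ∀ s, 1 ≤ s → s ≤ d →
      .spine (l + 1) g k t e s ∉ forbidden h d m ρ₀ B := by
    refine fun s hs hs' => notMem_forbidden.2 ⟨hspine s hs hs', hB.lt_height, fun i hi => ?_⟩
    obtain ⟨y, hy, hly⟩ := hlow i (mem_hitting.2
      ⟨_, hi, hspine s hs hs', hB.lt_height, le_rfl, le_rfl, le_rfl⟩)
    exact (notMem_forbidden.1 hV).2.2 i
      (hB.VsetElem_mem_of_spine_mem hi hy (Nat.lt_succ_of_le hly))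
  have hwalk : ∀ s, 1 ≤ s → s ≤ d → ReachableAvoiding (rawGraph h d m)
      (forbidden h d m ρ₀ B) (leaf h m (l + 1) g k) (.spine (l + 1) g k t e s) := by
    intro s hs
    induction s, hs using Nat.le_induction with
    | base =>
      intro hs'
      exact .of_adj (adj_leaf_spine (notMem_forbidden.1 hleaf).1 (hspine 1 le_rfl hs')) hleaf
        (hfree 1 le_rfl hs')
    | succ s hs ih =>
      intro hs'
      exact (ih (by omega)).step
        (adj_spine_succ (hspine s hs (by omega)) (hspine _ (by omega) hs'))
        (hfree _ (by omega) hs')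
  exact (hwalk d hB.spine_pos le_rfl).step (adj_spine_VsetElem
    (zero_lt_one.trans hB.one_lt_height) (hspine d hB.spine_pos le_rfl) (notMem_forbidden.1 hV).1)
    hV

/-- An obstacle that blocks a leaf or the interior of a spine is, by its label, confined to the
top level, except that it may also contain the end of the spine. -/
theorem spinesOpen (hB : ObstacleSystem h d m ρ ρ₀ B) (hl : 1 ≤ l) (hlm : l + 1 ≤ m)
    (hg : 1 ≤ g) (hg' : g ≤ NN h ^ (m - (l + 1)))
    (hlow : ∀ i ∈ hitting h d m ρ₀ B (l + 1) g (g + 1), ∃ y ∈ B i, level y ≤ l) :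
    SpinesOpen h d m (forbidden h d m ρ₀ B) l g := by
  have hh := zero_lt_one.trans hB.one_lt_height
  have hleaf := hB.leaf_notMem_forbidden hl hlm hg hg' hlow
  refine ⟨hleaf, ?_, ?_⟩
  all_goals
    intro k hk hk' x hx hxZ
    rw [VsetRaw_eq_image hh] at hx
    obtain ⟨e, ⟨he, hel⟩, rfl⟩ := hx
    refine hB.reachable_leaf_VsetElem (fun s hs hs' => ?_) hlow (hleaf k) hxZ
    have := pow_succ 2 h
    exact ⟨by omega, hlm, hg, hg', by omega, by omega, by omega, by omega, by omega, he, hel, hs,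
      hs'⟩

/-- If all obstacles between `V^{l+1}_{g₀}` and `V^{l+1}_{g₁}` meet the `c`-th copy of level `l`,
then a walk can use the lower level on both sides of this copy and jumps over the copy (and, if
need be, over the next one) via a leaf. -/
theorem joined_of_saturated_copy (hB : ObstacleSystem h d m ρ ρ₀ B) (hl : 1 ≤ l)
    (hg₀ : 1 ≤ g₀) (hlast : (g₁ - 1) * NN h ≤ NN h ^ (m - l))
    (hopen : ∀ g, g₀ ≤ g → g < g₁ → SpinesOpen h d m (forbidden h d m ρ₀ B) l g)
    (IH : GluingSetsJoined h d m ρ₀ B l) (hc : (g₀ - 1) * NN h + 1 ≤ c)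
    (hc' : c < (g₁ - 1) * NN h + 1)
    (hsat : ∀ c, (g₀ - 1) * NN h + 1 ≤ c → c < (g₁ - 1) * NN h + 1 →
      l ≤ (hitting h d m ρ₀ B l c (c + 1)).card →
      hitting h d m ρ₀ B l ((g₀ - 1) * NN h + 1) ((g₁ - 1) * NN h + 1) ⊆
        hitting h d m ρ₀ B l c (c + 1))
    (hcard : l ≤ (hitting h d m ρ₀ B l c (c + 1)).card) :
    JoinedAvoiding (rawGraph h d m) (forbidden h d m ρ₀ B) (VsetRaw h d m (l + 1) g₀)
      (VsetRaw h d m (l + 1) g₁) := by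
  classical
  have hh := zero_lt_one.trans hB.one_lt_height
  obtain ⟨g, k, c, hg, hg', hk, hk', ⟨hc, hc'⟩, hcard, hck⟩ :=
    exists_leaf_over_copy (P := fun c => l ≤ (hitting h d m ρ₀ B l c (c + 1)).card) hc hc' hcard
  have hsub : ∀ a b, (g₀ - 1) * NN h + 1 ≤ a → b ≤ (g₁ - 1) * NN h + 1 →
      hitting h d m ρ₀ B l a b ⊆ hitting h d m ρ₀ B l c (c + 1) := fun a b ha hb =>
    (hitting_mono (region_subset_region ha hb)).trans (hsat c hc hc' hcard)
  refine (joined_gluing_leaf hh hl hg₀ hopen hg hg' hk hk' fun b hb hb' => ?_).trans_singleton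
    (joined_leaf_gluing hh hl hg₀ hopen hg hg' hk hk' fun a ha ha' => ?_)
  · have hempty := (hB.disjoint_hitting (by omega) (by omega)).eq_bot_of_le
      (hsub ((g₀ - 1) * NN h + 1) b le_rfl (by omega))
    exact IH _ _ (by omega) hb (by omega) (by rw [hempty]; exact hl)
  · refine IH _ _ (by omega) ha' (by omega) ?_
    have hsub' := hsub a _ (by omega) le_rfl
    rcases hck with rfl | ⟨rfl, hnext⟩
    · have hempty := (hB.disjoint_hitting (by omega) (by omega)).symm.eq_bot_of_le hsub'
      rw [hempty]
      exact hl
    · refine (Finset.card_le_card ((Finset.subset_inter hsub' (hitting_mono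
        (region_subset_region (by omega) le_rfl))).trans
        (hB.hitting_inter_subset (Nat.le_succ _)))).trans_lt (not_le.1 hnext)

theorem gluingSetsJoined_succ (hB : ObstacleSystem h d m ρ ρ₀ B) (hl : 1 ≤ l) (hlm : l + 1 ≤ m)
    (IH : GluingSetsJoined h d m ρ₀ B l) : GluingSetsJoined h d m ρ₀ B (l + 1) := by
  intro g₀ g₁ hg₀ hlt hg₁ hcard
  have hh := zero_lt_one.trans hB.one_lt_height
  have hlast : (g₁ - 1) * NN h ≤ NN h ^ (m - l) := by
    rw [show m - l = m - (l + 1) + 1 by omega, pow_succ]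
    exact Nat.mul_le_mul_right _ (by omega)
  have hlast' := first_add_NN_le (h := h) hg₀ hlt
  have hsub : hitting h d m ρ₀ B l ((g₀ - 1) * NN h + 1) ((g₁ - 1) * NN h + 1) ⊆
      hitting h d m ρ₀ B (l + 1) g₀ g₁ := hitting_mono (region_subset_region_succ hl)
  rcases lt_or_ge (hitting h d m ρ₀ B l ((g₀ - 1) * NN h + 1) ((g₁ - 1) * NN h + 1)).card l with
    hfew | hmany
  · have := NN_pos h
    exact ((IH _ _ (by omega) (by omega) (by omega) hfew).mono_left
      (Set.subset_union_left.trans (VsetRaw_succ hh hl hg₀).ge)).mono_right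
      (Set.subset_union_left.trans (VsetRaw_succ hh hl (by omega)).ge)
  have heq := Finset.eq_of_subset_of_card_le hsub (by omega)
  have hopen : ∀ g, g₀ ≤ g → g < g₁ → SpinesOpen h d m (forbidden h d m ρ₀ B) l g := by
    refine fun g hg hg' => hB.spinesOpen hl hlm (by omega) (by omega) fun i hi => ?_
    have hi := hitting_mono (region_subset_region hg hg') hi
    obtain ⟨y, hy, hyr⟩ := mem_hitting.1 (heq.ge hi)
    exact ⟨y, hy, hyr.2.2.1⟩
  by_cases hbad : ∃ c, (g₀ - 1) * NN h + 1 ≤ c ∧ c < (g₁ - 1) * NN h + 1 ∧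
      l ≤ (hitting h d m ρ₀ B l c (c + 1)).card
  · obtain ⟨c, hc, hc', hcard'⟩ := hbad
    refine hB.joined_of_saturated_copy hl hg₀ hlast hopen IH hc hc' (fun c hc hc' hcard' => ?_)
      hcard'
    have hcsub : hitting h d m ρ₀ B l c (c + 1) ⊆
        hitting h d m ρ₀ B l ((g₀ - 1) * NN h + 1) ((g₁ - 1) * NN h + 1) :=
      hitting_mono (region_subset_region hc hc')
    exact (Finset.eq_of_subset_of_card_le hcsub (by rw [heq]; omega)).ge
  · push Not at hbad
    exact joined_of_copies_joined hh hl hg₀ hlt hopen fun c hc hc' =>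
      IH _ _ (by omega) (by omega) (by omega) (hbad c hc hc')

theorem gluingSetsJoined (hB : ObstacleSystem h d m ρ ρ₀ B) (hl : 1 ≤ l) (hlm : l ≤ m) :
    GluingSetsJoined h d m ρ₀ B l := by
  induction l, hl using Nat.le_induction with
  | base => exact hB.gluingSetsJoined_one
  | succ l hl ih => exact hB.gluingSetsJoined_succ hl hlm (ih (by omega))

theorem joined_SsetR_TsetR (hB : ObstacleSystem h d m ρ ρ₀ B) (hm : 2 ≤ m)
    (hcard : Fintype.card ι < m) :
    JoinedAvoiding (rawGraph h d m) (forbidden h d m ρ₀ B) (SsetR h d m) (TsetR h d m) := by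
  have hh := zero_lt_one.trans hB.one_lt_height
  exact ((hB.gluingSetsJoined (by omega) le_rfl 1 2 le_rfl one_lt_two (by simp)
    ((Finset.card_le_univ _).trans_lt hcard)).mono_left (VsetRaw_subset_SsetR hh hm)).mono_right
    (VsetRaw_subset_TsetR hh hm)

end ObstacleSystem

end Induction

end Ghdm

/-! ### The marked vertices -/

namespace Ghdm

section Marked

variable {h d m K q N i i' k k' : ℕ} {u u' s : Raw}

theorem natToBits_succ (q i : ℕ) :
    natToBits (q + 1) i = natToBits q (i / 2) ++ [i.testBit 0] := by
  simp only [natToBits, List.range_succ, List.map_append, List.map_cons, List.map_nil]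
  congr 1
  · refine List.map_congr_left fun a ha => ?_
    rw [List.mem_range] at ha
    rw [show q + 1 - 1 - a = q - 1 - a + 1 by omega, Nat.testBit_succ]
  · simp

theorem foldl_natToBits (q i : ℕ) :
    (natToBits q i).foldl (fun a b => 2 * a + if b then 1 else 0) 0 = i % 2 ^ q := by
  induction q generalizing i with
  | zero => simp [natToBits, Nat.mod_one]
  | succ q ih =>
    rw [natToBits_succ, List.foldl_append, ih, pow_succ', Nat.mod_mul, List.foldl_cons,
      List.foldl_nil, Nat.testBit_zero]
    rcases Nat.mod_two_eq_zero_or_one i with hi | hi <;> simp [hi, Nat.add_comm]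

theorem kOf_natToBits (hi : i < 2 ^ q) : kOf h (natToBits q i) = i * 2 ^ (h - q) + 1 := by
  rw [kOf, foldl_natToBits, length_natToBits, Nat.mod_eq_of_lt hi]

theorem take_natToBits {a : ℕ} (ha : a ≤ h) (x : ℕ) :
    (natToBits h x).take a = natToBits a (x / 2 ^ (h - a)) := by
  refine List.ext_getElem (by simpa [length_natToBits] using ha) fun n hn hn' => ?_
  rw [length_natToBits] at hn'
  simp only [natToBits, List.getElem_take, List.getElem_map, List.getElem_range,
    Nat.testBit_div_two_pow]
  congr 1
  omega

theorem natToBits_injOn (a : ℕ) : Set.InjOn (natToBits a) (Set.Iio (2 ^ a)) := by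
  intro x hx y hy hxy
  have := congrArg (List.foldl (fun a b => 2 * a + if b then 1 else 0) 0) hxy
  rwa [foldl_natToBits, foldl_natToBits, Nat.mod_eq_of_lt hx, Nat.mod_eq_of_lt hy] at this

/-- The set `U = S_1 ∪ ⋯ ∪ S_N`. -/
def markedSet (h d m q N : ℕ) : Set Raw :=
  ⋃ i ∈ Set.Icc 1 N, (SDeltaR h d m (natToBits q i) ∪ {leafLeftR h m (natToBits q i)})

theorem exists_of_mem_markedSet (hh : 0 < h) (hN : N < 2 ^ q) (hu : u ∈ markedSet h d m q N) :
    ∃ i, 1 ≤ i ∧ i < 2 ^ q ∧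
      ((∃ e, 1 ≤ e ∧ e ≤ m - 1 ∧ u = VsetElem h d (m - 1) (2 * (i * 2 ^ (h - q)) + 1) e) ∨
        ∃ k, (k = i * 2 ^ (h - q) ∨ k = i * 2 ^ (h - q) + 1) ∧ u = leaf h m m 1 k) := by
  simp only [markedSet, Set.mem_iUnion, Set.mem_Icc] at hu
  obtain ⟨i, ⟨hi, hiN⟩, hu⟩ := hu
  have hk := kOf_natToBits (h := h) (hiN.trans_lt hN)
  refine ⟨i, hi, hiN.trans_lt hN, ?_⟩
  rcases hu with (⟨e, he, hem, rfl⟩ | hu) | hu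
  · exact .inl ⟨e, he, hem, by rw [canon_VsetElem hh, hk, Nat.mul_add_one]; rfl⟩
  · exact .inr ⟨_, .inr hk, hu⟩
  · exact .inr ⟨_, .inl (by rw [hk, Nat.add_sub_cancel]), hu⟩

theorem branchDist_eq_zero_of_mem_markedSet (hh : 0 < h) (hN : N < 2 ^ q) (hKd : K ≤ d)
    (hu : u ∈ markedSet h d m q N) : branchDist h d K u = 0 := by
  obtain ⟨i, -, -, ⟨e, -, -, rfl⟩ | ⟨k, -, rfl⟩⟩ := exists_of_mem_markedSet hh hN hu
  · exact branchDist_VsetElem hKd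
  · exact branchDist_leaf hh K

theorem depth_of_mem_markedSet (hh : 0 < h) (hN : N < 2 ^ q) (hu : u ∈ markedSet h d m q N) :
    depth h u = h := by
  obtain ⟨i, -, -, ⟨e, -, -, rfl⟩ | ⟨k, -, rfl⟩⟩ := exists_of_mem_markedSet hh hN hu
  · exact depth_VsetElem
  · exact depth_leaf hh

theorem depth_of_mem_SsetR_union_TsetR (hh : 0 < h) (hs : s ∈ SsetR h d m ∪ TsetR h d m) :
    depth h s = h := by
  rcases hs with (⟨e, -, -, rfl⟩ | rfl) | (⟨e, -, -, rfl⟩ | rfl)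
  · rw [canon_VsetElem hh, depth_VsetElem]
  · exact depth_leaf hh
  · rw [canon_VsetElem hh, depth_VsetElem]
  · exact depth_leaf hh

theorem sub_one_div_of_eq {c : ℕ} (hc : 0 < c) (hi : 1 ≤ i)
    (hk : k = i * (2 * c) ∨ k = i * (2 * c) + 1) :
    k = i * (2 * c) ∧ (k - 1) / c = 2 * i - 1 ∨ k = i * (2 * c) + 1 ∧ (k - 1) / c = 2 * i := by
  rcases hk with rfl | rfl
  · refine .inl ⟨rfl, ?_⟩
    obtain ⟨a, rfl⟩ := Nat.exists_eq_add_of_le' hi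
    have : (a + 1) * (2 * c) - 1 = c - 1 + (2 * a + 1) * c := by
      have : (a + 1) * (2 * c) = c + (2 * a + 1) * c := by ring
      omega
    rw [this, Nat.add_mul_div_right _ _ hc, Nat.div_eq_of_lt (by omega)]
    omega
  · refine .inr ⟨rfl, ?_⟩
    rw [Nat.add_sub_cancel, ← Nat.mul_assoc, Nat.mul_div_cancel _ hc, Nat.mul_comm]

/-- The leaves on both sides of the left border of `Δ(x_i)` are told apart by their ancestors at
depth `q + 1`, just below the level of `x_i`. -/
theorem eq_of_take_leafPos_eq (hqh : q < h) (hi : 1 ≤ i) (hiq : i < 2 ^ q) (hi' : 1 ≤ i')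
    (hiq' : i' < 2 ^ q) (hk : k = i * 2 ^ (h - q) ∨ k = i * 2 ^ (h - q) + 1)
    (hk' : k' = i' * 2 ^ (h - q) ∨ k' = i' * 2 ^ (h - q) + 1)
    (htake : (leafPos h k).take (q + 1) = (leafPos h k').take (q + 1)) : k = k' := by
  have hpow : 2 ^ (h - q) = 2 * 2 ^ (h - (q + 1)) := by
    rw [← pow_succ']
    congr 1
    omega
  rw [hpow] at hk hk'
  have hcases := sub_one_div_of_eq (Nat.two_pow_pos _) hi hk
  have hcases' := sub_one_div_of_eq (Nat.two_pow_pos _) hi' hk'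
  have hq := pow_succ 2 q
  rw [leafPos, leafPos, take_natToBits (a := q + 1) hqh,
    take_natToBits (a := q + 1) hqh] at htake
  have hdiv := natToBits_injOn (q + 1) (Set.mem_Iio.2 (by omega)) (Set.mem_Iio.2 (by omega)) htake
  obtain rfl : i = i' := by omega
  omega

theorem branchLabel_leaf_one (hKh : K < h) (j k : ℕ) :
    branchLabel h d K (leaf h m j 1 k) = .tree j 1 ((leafPos h k).take (h - K)) := by
  rw [leaf, branchLabel_canon_tree hKh (leafPos_ne_nil (by omega) k)]
  simp [branchLabel, branchLabelCore]

theorem eq_of_branchLabel_VsetElem_eq {l g g' e e' : ℕ} (hKd : K ≤ d) (hKh : K < h)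
    (he : 1 ≤ e) (hel : e ≤ l) (he' : 1 ≤ e') (hel' : e' ≤ l)
    (hv : Valid h d m (VsetElem h d l g e)) (hv' : Valid h d m (VsetElem h d l g' e'))
    (heq : branchLabel h d K (VsetElem h d l g e) = branchLabel h d K (VsetElem h d l g' e')) :
    g - 1 = g' - 1 ∧ e = e' := by
  obtain ⟨hleft, hright⟩ := span_VsetElem (d := d) (g := g) (by omega : 0 < h) he hel
  obtain ⟨hleft', hright'⟩ := span_VsetElem (d := d) (g := g') (by omega : 0 < h) he' hel'
  have hpos := (label_of_span_point hKd hKh hv (hleft.trans hright.symm)).2.1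
  have hpos' := (label_of_span_point hKd hKh hv' (hleft'.trans hright'.symm)).2.1
  rw [heq, hpos', hleft, hleft'] at hpos
  refine ⟨(Nat.eq_of_mul_eq_mul_right (NN_pow_pos h _) hpos).symm, ?_⟩
  have hlevel := congrArg level heq
  rwa [branchLabel_VsetElem, branchLabel_VsetElem, level_branchLabelCore, level_branchLabelCore,
    level_VsetElem, level_VsetElem] at hlevel

theorem branchLabel_VsetElem_ne_tree {e g j l : ℕ} {p : List Bool} (he : e < j) :
    branchLabel h d K (VsetElem h d l g e) ≠ .tree j 1 p := by
  intro heq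
  have hlevel := congrArg level heq
  rw [branchLabel_VsetElem, level_branchLabelCore, level_VsetElem] at hlevel
  exact he.ne hlevel

theorem injOn_branchLabel_markedSet (hN : N < 2 ^ q) (hqK : q + 1 + K ≤ h) (hKd : K ≤ d) :
    Set.InjOn (branchLabel h d K) (markedSet h d m q N ∩ Verts h d m) := by
  rintro u ⟨hu, hv⟩ u' ⟨hu', hv'⟩ heq
  have hKh : K < h := by omega
  obtain ⟨i, hi, hiq, ⟨e, he, hem, rfl⟩ | ⟨k, hk, rfl⟩⟩ :=
    exists_of_mem_markedSet (by omega) hN hu <;>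
  obtain ⟨i', hi', hiq', ⟨e', he', hem', rfl⟩ | ⟨k', hk', rfl⟩⟩ :=
    exists_of_mem_markedSet (by omega) hN hu'
  · obtain ⟨hg, rfl⟩ := eq_of_branchLabel_VsetElem_eq hKd hKh he hem he' hem' hv hv' heq
    rw [Nat.add_sub_cancel, Nat.add_sub_cancel] at hg
    rw [hg]
  · rw [branchLabel_leaf_one hKh] at heq
    exact absurd heq (branchLabel_VsetElem_ne_tree (by omega))
  · rw [branchLabel_leaf_one hKh] at heq
    exact absurd heq.symm (branchLabel_VsetElem_ne_tree (by omega))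
  · rw [branchLabel_leaf_one hKh, branchLabel_leaf_one hKh, Raw.tree.injEq] at heq
    have htake := congrArg (List.take (q + 1)) heq.2.2
    rw [List.take_take, List.take_take, Nat.min_eq_left (by omega)] at htake
    rw [eq_of_take_leafPos_eq (by omega) hi hiq hi' hiq' hk hk' htake]

theorem le_edist_of_mem_markedSet (hN : N < 2 ^ q) (hqK : q + 1 + K ≤ h) (hKd : 2 * K ≤ d)
    {u u' : Verts h d m} (hu : u.1 ∈ markedSet h d m q N) (hu' : u'.1 ∈ markedSet h d m q N)
    (hne : u ≠ u') : (K : ℕ∞) ≤ (G h d m).edist u u' := by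
  refine le_iInf fun w => ?_
  rw [Nat.cast_le]
  by_contra! hlt
  have hdist := branchDist_eq_zero_of_mem_markedSet (K := K) (by omega) hN (by omega) hu
  have heq := branchLabel_eq_of_walk (by omega) hKd (by omega) (w.map (toRawGraph h d m))
    (by rw [Walk.length_map]; exact hdist ▸ (Nat.zero_add _).trans_lt hlt)
  exact hne (Subtype.ext
    (injOn_branchLabel_markedSet hN hqK (by omega) ⟨hu, u.2⟩ ⟨hu', u'.2⟩ heq))

theorem depth_le_add_edist (hh : 1 < h) (hd : 0 < d) (u v : Verts h d m) :
    (depth h u.1 : ℕ∞) ≤ depth h v.1 + (G h d m).edist u v := by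
  rcases eq_or_ne ((G h d m).edist u v) ⊤ with htop | htop
  · simp [htop]
  · obtain ⟨w, hw⟩ := exists_walk_of_edist_ne_top htop
    have hle := depth_le_add_length hh hd (w.map (toRawGraph h d m))
    rw [Walk.length_map] at hle
    rw [← hw]
    exact_mod_cast hle

theorem finite_Verts (h d m : ℕ) : (Verts h d m).Finite := by
  let T := NN h ^ m
  have hT : ∀ {a i}, i ≤ NN h ^ (m - a) → i ≤ T := fun hi =>
    hi.trans (Nat.pow_le_pow_right (NN_pos h) (Nat.sub_le _ _))
  let paths : Fin ((d + 1) * NN h ^ (m - 1) + 1) → Raw := fun k => .path k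
  let trees : Fin (m + 1) × Fin (T + 1) × {p : List Bool | p.length ≤ h} → Raw :=
    fun x => .tree x.1 x.2.1 x.2.2
  let spines : Fin (m + 1) × Fin (T + 1) × Fin (2 ^ h + 1) × Fin (2 ^ (h + 1) + 1) ×
      Fin (m + 1) × Fin (d + 1) → Raw :=
    fun x => .spine x.1 x.2.1 x.2.2.1 x.2.2.2.1 x.2.2.2.2.1 x.2.2.2.2.2
  have : Finite {p : List Bool | p.length ≤ h} := List.finite_length_le Bool h
  refine (((Set.finite_range paths).union (Set.finite_range trees)).union
    (Set.finite_range spines)).subset fun x hx => ?_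
  cases x with
  | path k => exact .inl (.inl ⟨⟨k, Nat.lt_succ_of_le hx⟩, rfl⟩)
  | tree j i p =>
    obtain ⟨-, hj, -, hi, hp, -⟩ := hx
    exact .inl (.inr ⟨(⟨j, by omega⟩, ⟨i, Nat.lt_succ_of_le (hT hi)⟩, ⟨p, hp⟩), rfl⟩)
  | spine j i k t e s =>
    obtain ⟨-, hj, -, hi, -, hk, -, -, ht, -, he, -, hs⟩ := hx
    exact .inr ⟨(⟨j, by omega⟩, ⟨i, Nat.lt_succ_of_le (hT hi)⟩, ⟨k, by omega⟩, ⟨t, by omega⟩,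
      ⟨e, by omega⟩, ⟨s, by omega⟩), rfl⟩

end Marked

end Ghdm

/-! ### Contracting balls -/

namespace CGT

section Contraction

variable {W X : Type*} {H : SimpleGraph W} {π : W → X} {F R A B : Set W}

/-- The contraction of `H` along `π`, using only the edges between vertices of `F`: two points of
`X` are adjacent if they are the images of adjacent vertices in `F`. -/
def contraction (H : SimpleGraph W) (π : W → X) (F : Set W) : SimpleGraph X where
  Adj x y := x ≠ y ∧ ∃ v ∈ F, ∃ w ∈ F, H.Adj v w ∧ π v = x ∧ π w = y
  symm := ⟨fun _ _ ⟨hne, v, hv, w, hw, hvw, hx, hy⟩ => ⟨hne.symm, w, hw, v, hv, hvw.symm, hy, hx⟩⟩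
  loopless := ⟨fun _ hx => hx.1 rfl⟩

/-- Any two vertices outside `R` with the same image under `π` are joined within their fibre and
outside `R`. -/
def ConnectedFibersOff (H : SimpleGraph W) (π : W → X) (R : Set W) : Prop :=
  ∀ v w, π v = π w → v ∉ R → w ∉ R → ReachableAvoiding H (R ∪ {z | π z ≠ π v}) v w

theorem finite_edgeSet_contraction (hF : F.Finite) : (contraction H π F).edgeSet.Finite := by
  refine (((hF.image π).prod (hF.image π)).image fun x => s(x.1, x.2)).subset fun e => ?_
  induction e with
  | _ x y =>
    rintro ⟨-, v, hv, w, hw, -, rfl, rfl⟩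
    exact ⟨(π v, π w), ⟨⟨v, hv, rfl⟩, ⟨w, hw, rfl⟩⟩, rfl⟩

theorem ReachableAvoiding.contraction {Z : Set X} {a b : W}
    (hab : ReachableAvoiding H (Fᶜ ∪ π ⁻¹' Z) a b) :
    ReachableAvoiding (contraction H π F) Z (π a) (π b) := by
  obtain ⟨p, hp⟩ := hab
  simp only [Set.mem_union, Set.mem_compl_iff, Set.mem_preimage, not_or, not_not] at hp
  induction p with
  | nil => exact .refl (hp _ (by simp)).2
  | @cons u v _ huv p ih =>
    obtain ⟨huF, huZ⟩ := hp u (by simp)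
    obtain ⟨hvF, hvZ⟩ := hp v (by simp)
    have hrest := ih fun z hz => hp z (by simp [hz])
    by_cases heq : π u = π v
    · rwa [heq]
    · have hadj : (CGT.contraction H π F).Adj (π u) (π v) :=
        ⟨heq, u, huF, v, hvF, huv, rfl, rfl⟩
      exact (of_adj hadj huZ hvZ).trans hrest

theorem ConnectedFibersOff.lift_walk (hfib : ConnectedFibersOff H π R) (hFR : Disjoint F R)
    {x y : X} (p : (contraction H π F).Walk x y) {a b : W} (hax : π a = x) (hby : π b = y)
    (ha : a ∉ R) (hb : b ∉ R) : ReachableAvoiding H (R ∪ {z | π z ∉ p.support}) a b := by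
  induction p generalizing a with
  | nil =>
    refine (hfib a b (hax.trans hby.symm) ha hb).anti (Set.union_subset_union_right R ?_)
    simp [hax]
  | @cons x y _ hxy p ih =>
    obtain ⟨-, v, hv, w, hw, hvw, hvx, hwy⟩ := id hxy
    have hvR := hFR.notMem_of_mem_left hv
    have hwR := hFR.notMem_of_mem_left hw
    have hfirst := (hfib a v (hax.trans hvx.symm) ha hvR).anti
      (Z' := R ∪ {z | π z ∉ (Walk.cons hxy p).support})
      (Set.union_subset_union_right R fun z hz hzx => hz (by simp [hzx, hax]))
    have hlast := (ih hwy hby hwR).anti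
      (Z' := R ∪ {z | π z ∉ (Walk.cons hxy p).support})
      (Set.union_subset_union_right R fun z hz hzp => hz (by simp [hzp]))
    exact (hfirst.step hvw hlast.left_notMem).trans hlast

/-- Menger's theorem in the contraction, with the paths lifted back to `H`. -/
theorem ConnectedFibersOff.exists_paths (hfib : ConnectedFibersOff H π R) (hF : F.Finite)
    (hA : Disjoint A R) (hB : Disjoint B R) {k : ℕ}
    (hjoined : ∀ Z : Finset X, Z.card < k →
      JoinedAvoiding H ((F \ R)ᶜ ∪ π ⁻¹' ↑Z) A B) :
    ∃ (a b : Fin k → W) (P : ∀ i : Fin k, H.Walk (a i) (b i)), (∀ i, (P i).IsPath) ∧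
      (∀ i, a i ∈ A ∧ b i ∈ B) ∧ (∀ i, ∀ v ∈ (P i).support, v ∉ R) ∧
      ∀ i j v w, v ∈ (P i).support → w ∈ (P j).support → π v = π w → i = j := by
  classical
  obtain ⟨x, y, Q, -, hxy, hdisj⟩ : HasDisjointPaths (contraction H π (F \ R)) (π '' A) (π '' B)
      k := by
    refine menger (finite_edgeSet_contraction hF.sdiff) fun Z hZ => ?_
    obtain ⟨a, ha, b, hb, hab⟩ := hjoined Z hZ
    exact ⟨_, ⟨a, ha, rfl⟩, _, ⟨b, hb, rfl⟩, hab.contraction⟩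
  choose a ha hax using fun i => (hxy i).1
  choose b hb hby using fun i => (hxy i).2
  choose q hq using fun i => hfib.lift_walk Set.disjoint_sdiff_left (Q i) (hax i) (hby i)
    (hA.notMem_of_mem_left (ha i)) (hB.notMem_of_mem_left (hb i))
  simp only [Set.mem_union, Set.mem_ofPred_eq, not_or, not_not] at hq
  have hbypass : ∀ i, ∀ v ∈ (q i).bypass.support, v ∉ R ∧ π v ∈ (Q i).support := fun i v hv =>
    hq i v ((q i).support_bypass_subset_support hv)
  refine ⟨a, b, fun i => (q i).bypass, fun i => (q i).bypass_isPath, fun i => ⟨ha i, hb i⟩,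
    fun i v hv => (hbypass i v hv).1, fun i j v w hv hw hvw => ?_⟩
  exact hdisj i j (π v) (hbypass i v hv).2 (hvw ▸ (hbypass j w hw).2)

end Contraction

section Balls

variable {V W : Type*} {G : SimpleGraph V} {H : SimpleGraph W} {f : V → W} {C R : Set W} {r : ℕ}
  {c z : W}

theorem exists_walk_of_edist_le {a z : W} (hz : H.edist a z ≤ r) :
    ∃ p : H.Walk a z, p.length ≤ r ∧ ∀ v ∈ p.support, H.edist a v ≤ r := by
  classical
  obtain ⟨p, hp⟩ := exists_walk_of_edist_ne_top (ne_top_of_le_ne_top (ENat.natCast_ne_top r) hz)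
  have hlen : p.length ≤ r := by
    rw [← hp] at hz
    exact_mod_cast hz
  refine ⟨p, hlen, fun v hv => (edist_le (p.takeUntil v hv)).trans ?_⟩
  exact_mod_cast (p.length_takeUntil_le_length hv).trans hlen

open Classical in
/-- The map that sends a ball of radius `r` around a point of `C` to its centre and is the identity
outside these balls. It is meaningful if the balls are disjoint. -/
noncomputable def ballCollapse (H : SimpleGraph W) (C : Set W) (r : ℕ) (z : W) : W :=
  if hz : ∃ c ∈ C, H.edist c z ≤ r then hz.choose else z

/-- The balls of radius `r` around distinct points of `C` are disjoint. -/
def DisjointBalls (H : SimpleGraph W) (C : Set W) (r : ℕ) : Prop :=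
  ∀ c ∈ C, ∀ c' ∈ C, ∀ z, H.edist c z ≤ r → H.edist c' z ≤ r → c = c'

theorem ballCollapse_of_edist_le (hC : DisjointBalls H C r) (hc : c ∈ C) (hz : H.edist c z ≤ r) :
    ballCollapse H C r z = c := by
  have hex : ∃ c ∈ C, H.edist c z ≤ r := ⟨c, hc, hz⟩
  rw [ballCollapse, dif_pos hex]
  exact hC _ hex.choose_spec.1 c hc z hex.choose_spec.2 hz

theorem edist_ballCollapse_le (z : W) : H.edist (ballCollapse H C r z) z ≤ r := by
  by_cases hex : ∃ c ∈ C, H.edist c z ≤ r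
  · rw [ballCollapse, dif_pos hex]
    exact hex.choose_spec.2
  · rw [ballCollapse, dif_neg hex, edist_self]
    exact zero_le

theorem ballCollapse_eq_self (hz : ballCollapse H C r z ∉ C) : ballCollapse H C r z = z := by
  by_cases hex : ∃ c ∈ C, H.edist c z ≤ r
  · rw [ballCollapse, dif_pos hex] at hz
    exact absurd hex.choose_spec.1 hz
  · rw [ballCollapse, dif_neg hex]

theorem connectedFibersOff_ballCollapse (hC : DisjointBalls H C r)
    (hR : ∀ c ∈ C, ∀ z, H.edist c z ≤ r → z ∉ R) :
    ConnectedFibersOff H (ballCollapse H C r) R := by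
  intro v w hvw hv _
  by_cases hvC : ballCollapse H C r v ∈ C
  · have hcentre : ∀ z, ballCollapse H C r z = ballCollapse H C r v →
        ReachableAvoiding H (R ∪ {z | ballCollapse H C r z ≠ ballCollapse H C r v})
          (ballCollapse H C r v) z := by
      intro z hz
      obtain ⟨p, -, hp⟩ := exists_walk_of_edist_le (hz ▸ edist_ballCollapse_le (C := C) z)
      refine ⟨p, fun x hx => ?_⟩
      rintro (hxR | hxne)
      · exact hR _ hvC x (hp x hx) hxR
      · exact hxne (ballCollapse_of_edist_le hC hvC (hp x hx))
    exact (hcentre v rfl).symm.trans (hcentre w hvw.symm)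
  · have hself := ballCollapse_eq_self hvC
    have hself' := ballCollapse_eq_self (hvw ▸ hvC)
    obtain rfl : v = w := by rw [← hself, hvw, hself']
    exact .refl (by simpa using hv)

theorem exists_centre_of_ballCollapse {A : ℕ} {U : Set V} (hf : ∀ w, ∃ v, H.edist w (f v) ≤ A)
    (hA : A ≤ r) (x : W) :
    ∃ c, ∀ z, ballCollapse H (f '' U) r z = x → H.edist (f c) z ≤ r := by
  by_cases hx : x ∈ f '' U
  · obtain ⟨u, -, rfl⟩ := hx
    exact ⟨u, fun z hz => hz ▸ edist_ballCollapse_le z⟩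
  · obtain ⟨c, hc⟩ := hf x
    refine ⟨c, fun z hz => ?_⟩
    obtain rfl : x = z := hz.symm.trans (ballCollapse_eq_self (by rwa [hz]))
    rw [edist_comm]
    exact hc.trans (Nat.cast_le.2 hA)

/-- A finite set `F` is obtained by fixing a short walk in `H` for each edge of `G`. -/
theorem exists_finite_reachableAvoiding_image [Finite V] {D : ℕ}
    (hf : ∀ x y, G.Adj x y → H.edist (f x) (f y) ≤ D) :
    ∃ F : Set W, F.Finite ∧ ∀ (Z : Set V) (x y : V), ReachableAvoiding G Z x y →
      ReachableAvoiding H {v | ¬ (v ∈ F ∧ ∃ a ∉ Z, H.edist (f a) v ≤ D)} (f x) (f y) := by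
  choose w _ hw using fun x y hxy => exists_walk_of_edist_le (hf x y hxy)
  refine ⟨Set.range f ∪ ⋃ x, ⋃ y, ⋃ hxy, {v | v ∈ (w x y hxy).support},
    (Set.finite_range f).union (Set.finite_iUnion fun x => Set.finite_iUnion fun y =>
      Set.finite_iUnion fun hxy => (w x y hxy).support.finite_toSet), ?_⟩
  rintro Z x y ⟨p, hp⟩
  induction p with
  | @nil x => exact .refl (not_not.2 ⟨.inl ⟨x, rfl⟩, x, hp x (by simp), by simp⟩)
  | @cons a b _ hab p ih =>
    refine ReachableAvoiding.trans ⟨w a b hab, fun v hv => not_not.2 ⟨.inr ?_, ?_⟩⟩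
      (ih fun z hz => hp z (by simp [hz]))
    · simp only [Set.mem_iUnion]
      exact ⟨a, b, hab, hv⟩
    · exact ⟨a, hp a (by simp), hw a b hab v hv⟩

end Balls

end CGT

/-! ### Quasi-isometric images -/

namespace CGT.IsQI

variable {V W : Type*} {G : SimpleGraph V} {H : SimpleGraph W} {f : V → W} {M A : ℕ}

theorem edist_le_of_edist_le (hf : IsQI M A G H f) {u v : V} {w : W} {c c' : ℕ}
    (hu : H.edist (f u) w ≤ c) (hv : H.edist (f v) w ≤ c') :
    G.edist u v ≤ (M * (c + c' + A) : ℕ) := by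
  calc G.edist u v ≤ M * H.edist (f u) (f v) + M * A := hf.lower u v
    _ ≤ M * (H.edist (f u) w + H.edist w (f v)) + M * A := by gcongr; exact H.edist_triangle
    _ ≤ M * (c + c') + M * A := by rw [H.edist_comm (u := w)]; gcongr
    _ = (M * (c + c' + A) : ℕ) := by push_cast; rw [← mul_add]

theorem edist_le_of_adj (hf : IsQI M A G H f) {u v : V} (huv : G.Adj u v) :
    H.edist (f u) (f v) ≤ (M + A : ℕ) := by
  simpa [edist_eq_one_iff_adj.2 huv] using hf.upper u v

theorem disjointBalls_image (hf : IsQI M A G H f) {U : Set V} {r K : ℕ} (hK : M * (r + r + A) < K)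
    (hU : ∀ u ∈ U, ∀ u' ∈ U, u ≠ u' → (K : ℕ∞) ≤ G.edist u u') :
    DisjointBalls H (f '' U) r := by
  rintro _ ⟨u, hu, rfl⟩ _ ⟨u', hu', rfl⟩ z hz hz'
  by_contra hne
  have hle := (hU u hu u' hu' fun heq => hne (heq ▸ rfl)).trans (hf.edist_le_of_edist_le hz hz')
  exact hK.not_ge (Nat.cast_le.1 hle)

end CGT.IsQI

namespace Ghdm

open CGT

variable {h d m M A r q N : ℕ} {W : Type*} {H : SimpleGraph W} {f : Verts h d m → W}

theorem isSmall_ball {ρ : ℕ} (c : Verts h d m) :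
    IsSmall h d m ρ (Subtype.val '' {v | (G h d m).edist c v ≤ ρ}) := by
  rintro _ ⟨x, hx, rfl⟩ _ ⟨y, hy, rfl⟩
  obtain ⟨p, hplen, hp⟩ := exists_walk_of_edist_le hx
  obtain ⟨p', hplen', hp'⟩ := exists_walk_of_edist_le hy
  suffices hwalk : ∃ w : (rawGraph h d m).Walk (toRawGraph h d m x) (toRawGraph h d m y),
      w.length ≤ 2 * ρ ∧ ∀ v ∈ w.support, v ∈ Subtype.val '' {v | (G h d m).edist c v ≤ ρ} from
    hwalk
  refine ⟨(p.reverse.append p').map (toRawGraph h d m), ?_, fun v hv => ?_⟩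
  · rw [Walk.length_map, Walk.length_append, Walk.length_reverse]
    omega
  · rw [Walk.support_map, List.mem_map] at hv
    obtain ⟨z, hz, rfl⟩ := hv
    rw [Walk.mem_support_append_iff, Walk.support_reverse, List.mem_reverse] at hz
    exact ⟨z, hz.elim (hp z) (hp' z), rfl⟩

theorem reachableAvoiding_of_rawGraph {Z : Set Raw} {x y : Raw}
    (hxy : ReachableAvoiding (rawGraph h d m) Z x y) (hx : Valid h d m x) (hy : Valid h d m y) :
    ReachableAvoiding (G h d m) (Subtype.val ⁻¹' Z) ⟨x, hx⟩ ⟨y, hy⟩ := by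
  obtain ⟨p, hp⟩ := hxy
  induction p with
  | @nil x => exact .refl (hp x (by simp))
  | @cons x z _ hxz p ih =>
    obtain ⟨-, hz, hne, hrel⟩ := id hxz
    have hadj : (G h d m).Adj ⟨x, hx⟩ ⟨z, hz⟩ := by
      simp only [G, SimpleGraph.comap_adj, SimpleGraph.fromRel_adj]
      exact ⟨hne, hrel⟩
    exact (ReachableAvoiding.of_adj hadj (hp x (by simp)) (hp z (by simp))).trans
      (ih hz hy fun v hv => hp v (by simp [hv]))

theorem depth_le_of_mem_gBall_root (hf : IsQI M A (G h d m) H f) (hh : 1 < h) (hd : 0 < d)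
    {s c : ℕ} {u : Verts h d m} {z : W} (hz : z ∈ gBall H (f '' lift {RootR m}) s)
    (hu : H.edist (f u) z ≤ c) : depth h u.1 ≤ M * (c + s + A) := by
  obtain ⟨_, ⟨x, hx, rfl⟩, hxz⟩ := hz
  have hdepth_root : depth h x.1 = 0 := by
    rw [show x.1 = RootR m from hx]
    simp [RootR, depth]
  have hle := (depth_le_add_edist hh hd u x).trans
    (add_le_add_right (hf.edist_le_of_edist_le hu hxz) _)
  rw [hdepth_root, Nat.cast_zero, zero_add] at hle
  exact_mod_cast hle

/-- The numerical conditions on the parameters of `G_{h,d,m}` under which the quasi-isometry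
argument works: the pullback of a ball of radius `r` lies in a ball of radius
`ρ = M (r + M + 2A)`, and the pullback of the ball around the image of the root lies in the first
`M (Mq + M + 3A)` levels. -/
structure LargeParameters (M A r q d h : ℕ) : Prop where
  one_le : 1 ≤ M
  le_radius : A ≤ r
  spine_long : 4 * (M * (r + M + 2 * A)) + 2 ≤ d
  lt_height : 2 * (M * (r + M + 2 * A)) + M * (M * q + M + 3 * A) < h

theorem LargeParameters.one_lt_height (hp : LargeParameters M A r q d h) : 1 < h := by
  have hpos : 0 < M * (M * q + M + 3 * A) := Nat.mul_pos hp.one_le (by have := hp.one_le; omega)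
  have := hp.lt_height
  omega

theorem largeParameters_of_eq (hM : 1 ≤ M) (hr : r = M ^ 2 * (3 * A + 1) + 2 * A + M)
    (hd : d = 4 * r * M * ((2 * r + q) * M + (6 * r + 1) * A + 1)) :
    LargeParameters M A r q d (d + 2) := by
  have hradius : M + 3 * A + 1 ≤ r := by nlinarith [Nat.one_le_pow 2 M hM]
  have hdiam : M * (r + M + 2 * A) ≤ 2 * (M * r) := by
    nlinarith [Nat.mul_le_mul_left M (show r + M + 2 * A ≤ 2 * r by omega)]
  have hroot : M * (M * q + M + 3 * A) ≤ M * M * q + M * r := by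
    nlinarith [Nat.mul_le_mul_left M (show M + 3 * A ≤ r by omega)]
  have hspine : 8 * ((M * r) * (M * r)) + 4 * ((M * M * q) * r) + 4 * (M * r) ≤ d := by
    rw [hd]
    nlinarith [Nat.zero_le (4 * r * M * ((6 * r + 1) * A))]
  have hsq : 2 * (M * r) ≤ (M * r) * (M * r) := Nat.mul_le_mul_right _ (by nlinarith)
  have hlevel : M * M * q ≤ (M * M * q) * r := Nat.le_mul_of_pos_right _ (by omega)
  have hpos : 1 ≤ M * r := Nat.mul_pos hM (by omega)
  exact ⟨hM, by omega, by omega, by omega⟩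

/-- The preimage of each point of `Z` lies in a ball of `G_{h,d,m}`, which serves as an obstacle. -/
theorem joinedAvoiding_lift_SsetR_lift_TsetR (hp : LargeParameters M A r q d h)
    (hf : IsQI M A (G h d m) H f) (hm : 2 ≤ m) {X : Type*} {π : W → X}
    {c : X → Verts h d m} (hc : ∀ z, H.edist (f (c (π z))) z ≤ r) {Z : Finset X}
    (hZ : Z.card < m) :
    JoinedAvoiding (G h d m)
      {a | ∃ v, H.edist (f a) v ≤ (M + A : ℕ) ∧
        (v ∈ gBall H (f '' lift {RootR m}) (M * q + A) ∨ π v ∈ Z)}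
      (lift (SsetR h d m)) (lift (TsetR h d m)) := by
  have hh1 := hp.one_lt_height
  obtain ⟨hM, -, hd, hh⟩ := hp
  set ρ := M * (r + M + 2 * A)
  set ρ₀ := 2 * ρ + M * (M * q + M + 3 * A)
  let B : Z → Set Raw := fun x => Subtype.val '' {v | (G h d m).edist (c x) v ≤ ρ}
  have hB : ObstacleSystem h d m ρ ρ₀ B :=
    { spine_long := hd
      two_mul_lt := Nat.lt_add_of_pos_right (Nat.mul_pos hM (by omega))
      lt_height := hh
      isSmall := fun x => isSmall_ball (c x)
      valid := by
        rintro x _ ⟨v, -, rfl⟩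
        exact v.2 }
  obtain ⟨s, hs, t, ht, hst⟩ := hB.joined_SsetR_TsetR hm (by simpa using hZ)
  refine ⟨⟨s, (notMem_forbidden.1 hst.left_notMem).1⟩, hs,
    ⟨t, (notMem_forbidden.1 hst.right_notMem).1⟩, ht,
    (reachableAvoiding_of_rawGraph hst _ _).anti ?_⟩
  rintro a ⟨v, hav, hv⟩
  by_contra ha
  obtain ⟨-, hdeep, hfree⟩ := notMem_forbidden.1 ha
  rcases hv with hroot | hvZ
  · have hshallow := depth_le_of_mem_gBall_root hf hh1 (by omega) hroot hav
    have hle : M * (M + A + (M * q + A) + A) ≤ M * (M * q + M + 3 * A) :=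
      Nat.mul_le_mul_left M (by omega)
    omega
  · refine hfree ⟨π v, hvZ⟩ ⟨a, (hf.edist_le_of_edist_le (hc v) hav).trans ?_, rfl⟩
    exact Nat.cast_le.2 (Nat.mul_le_mul_left M (by omega))

theorem exists_finite_joinedAvoiding_image (hp : LargeParameters M A r q d h)
    (hf : IsQI M A (G h d m) H f) (hm : 2 ≤ m) {X : Type*} {π : W → X}
    {c : X → Verts h d m} (hc : ∀ z, H.edist (f (c (π z))) z ≤ r) :
    ∃ F : Set W, F.Finite ∧ ∀ Z : Finset X, Z.card < m →
      JoinedAvoiding H ((F \ gBall H (f '' lift {RootR m}) (M * q + A))ᶜ ∪ π ⁻¹' ↑Z)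
        (f '' lift (SsetR h d m)) (f '' lift (TsetR h d m)) := by
  have := (finite_Verts h d m).to_subtype
  obtain ⟨F, hF, himage⟩ :=
    exists_finite_reachableAvoiding_image (f := f) fun _ _ => hf.edist_le_of_adj
  refine ⟨F, hF, fun Z hZ => ?_⟩
  obtain ⟨s, hs, t, ht, hst⟩ := joinedAvoiding_lift_SsetR_lift_TsetR hp hf hm hc hZ
  refine ⟨f s, ⟨s, hs, rfl⟩, f t, ⟨t, ht, rfl⟩, (himage _ s t hst).anti ?_⟩
  rintro v hv ⟨hvF, a, ha, hav⟩
  refine ha ⟨v, hav, hv.imp_left fun hvFR => ?_⟩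
  by_contra hvR
  exact hvFR ⟨hvF, hvR⟩

theorem disjointBalls_image_markedSet (hp : LargeParameters M A r q d h)
    (hf : IsQI M A (G h d m) H f) (hN : N < 2 ^ q) :
    DisjointBalls H (f '' lift (markedSet h d m q N)) r := by
  obtain ⟨hM, -, hd, hh⟩ := hp
  have hK : M * (r + r + A) < 2 * (M * (r + M + 2 * A)) + 1 := by nlinarith
  have hqK : q + 1 + (2 * (M * (r + M + 2 * A)) + 1) ≤ h := by nlinarith [Nat.mul_le_mul hM hM]
  refine hf.disjointBalls_image hK fun u hu u' hu' hne => ?_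
  exact le_edist_of_mem_markedSet hN hqK (by omega) hu hu' hne

theorem notMem_gBall_root_of_depth_eq (hp : LargeParameters M A r q d h)
    (hf : IsQI M A (G h d m) H f) {u : Verts h d m} (hu : depth h u.1 = h) {z : W}
    (hz : H.edist (f u) z ≤ r) : z ∉ gBall H (f '' lift {RootR m}) (M * q + A) := by
  have hh1 := hp.one_lt_height
  obtain ⟨-, -, hd, hh⟩ := hp
  intro hroot
  have hle := depth_le_of_mem_gBall_root hf hh1 (by omega) hroot hz
  rw [hu] at hle
  nlinarith

theorem disjoint_image_lift_gBall_root (hp : LargeParameters M A r q d h)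
    (hf : IsQI M A (G h d m) H f) {S : Set Raw} (hS : S ⊆ SsetR h d m ∪ TsetR h d m) :
    Disjoint (f '' lift S) (gBall H (f '' lift {RootR m}) (M * q + A)) := by
  rw [Set.disjoint_left]
  rintro _ ⟨s, hs, rfl⟩
  exact notMem_gBall_root_of_depth_eq hp hf
    (depth_of_mem_SsetR_union_TsetR (hp.lt_height.pos) (hS hs)) (by simp)

end Ghdm

theorem statement14_general {M A r N q d h m : ℕ} (hp : Ghdm.LargeParameters M A r q d h)
    (hm : 2 ≤ m) (hN : N < 2 ^ q) {W : Type*} {H : SimpleGraph W} {f : Ghdm.Verts h d m → W}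
    (hf : CGT.IsQI M A (Ghdm.G h d m) H f) :
    ∃ (a b : Fin m → W) (P : ∀ i : Fin m, H.Walk (a i) (b i)),
      (∀ i, (P i).IsPath) ∧
      (∀ i, a i ∈ f '' Ghdm.lift (Ghdm.SsetR h d m) ∧
        b i ∈ f '' Ghdm.lift (Ghdm.TsetR h d m)) ∧
      (∀ i, ∀ v ∈ (P i).support,
        v ∉ CGT.gBall H (f '' Ghdm.lift {Ghdm.RootR m}) (M * q + A)) ∧
      (∀ i j, i ≠ j → ∀ v, v ∈ (P i).support → v ∉ (P j).support) ∧
      (∀ u : Ghdm.Verts h d m, u.1 ∈ Ghdm.markedSet h d m q N → ∀ i j : Fin m,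
        (∃ v ∈ (P i).support, v ∈ CGT.gBall H {f u} r) →
        (∃ v ∈ (P j).support, v ∈ CGT.gBall H {f u} r) → i = j) := by
  have hballs := Ghdm.disjointBalls_image_markedSet hp hf hN
  have hfib : CGT.ConnectedFibersOff H
      (CGT.ballCollapse H (f '' Ghdm.lift (Ghdm.markedSet h d m q N)) r)
      (CGT.gBall H (f '' Ghdm.lift {Ghdm.RootR m}) (M * q + A)) := by
    refine CGT.connectedFibersOff_ballCollapse hballs ?_
    rintro _ ⟨u, hu, rfl⟩ z hz
    exact Ghdm.notMem_gBall_root_of_depth_eq hp hf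
      (Ghdm.depth_of_mem_markedSet hp.lt_height.pos hN hu) hz
  choose c hc using CGT.exists_centre_of_ballCollapse
    (U := Ghdm.lift (Ghdm.markedSet h d m q N)) hf.dense hp.le_radius
  obtain ⟨F, hF, hjoined⟩ :=
    Ghdm.exists_finite_joinedAvoiding_image hp hf hm fun z => hc _ z rfl
  obtain ⟨a, b, P, hpath, hends, havoid, hdisj⟩ := hfib.exists_paths hF
    (Ghdm.disjoint_image_lift_gBall_root hp hf Set.subset_union_left)
    (Ghdm.disjoint_image_lift_gBall_root hp hf Set.subset_union_right) hjoined
  refine ⟨a, b, P, hpath, hends, havoid,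
    fun i j hij v hv hv' => hij (hdisj i j v v hv hv' rfl), ?_⟩
  rintro u hu i j ⟨v, hv, _, rfl, hvu⟩ ⟨w, hw, _, rfl, hwu⟩
  have hcollapse : ∀ z, H.edist (f u) z ≤ r → CGT.ballCollapse H _ r z = f u := fun z =>
    CGT.ballCollapse_of_edist_le hballs ⟨u, hu, rfl⟩
  exact hdisj i j v w hv hw ((hcollapse v hvu).trans (hcollapse w hwu).symm)

/-- with the parameters `r, N, q, d, h, m` chosen as in the proof of the
main theorem, for any `(M,A)`-quasi-isometry `f` from `G := G_{h,d,m}` to a connected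
graph `H` there are `m` pairwise disjoint `f(S(G))`–`f(T(G))` paths in `H` avoiding
`B_H(f(R(G)), Mq + A)` such that for every `u ∈ U := S_1 ∪ ⋯ ∪ S_N` (where
`S_i = S(Δ(x_i)) ∪ {ℓ_i}` for the `i`-th vertex `x_i` at level `q` of `B(G)`) at most one
of the paths meets `B_H(f(u), r)`. -/
theorem statement14 (M A n : ℕ) (hM : 1 ≤ M) (hn : 2 ≤ n)
    (r N q d h m : ℕ)
    (hr : r = M ^ 2 * (3 * A + 1) + 2 * A + M)
    (hN : N = n * (n - 1) / 2)
    (hq : q = Nat.clog 2 (N + 1))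
    (hd : d = 4 * r * M * ((2 * r + q) * M + (6 * r + 1) * A + 1))
    (hh : h = d + 2) (hm : m = n ^ 2)
    {V' : Type} (H : SimpleGraph V') (hH : H.Connected)
    (f : Ghdm.Verts h d m → V') (hf : CGT.IsQI M A (Ghdm.G h d m) H f) :
    ∃ (a b : Fin m → V') (P : ∀ i : Fin m, H.Walk (a i) (b i)),
      (∀ i, (P i).IsPath) ∧
      (∀ i, a i ∈ f '' Ghdm.lift (Ghdm.SsetR h d m) ∧
        b i ∈ f '' Ghdm.lift (Ghdm.TsetR h d m)) ∧
      (∀ i, ∀ v ∈ (P i).support,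
        v ∉ CGT.gBall H (f '' Ghdm.lift {Ghdm.RootR m}) (M * q + A)) ∧
      (∀ i j, i ≠ j → ∀ v, v ∈ (P i).support → v ∉ (P j).support) ∧
      (∀ u : Ghdm.Verts h d m,
        u.1 ∈ ⋃ i ∈ Set.Icc 1 N,
          (Ghdm.SDeltaR h d m (Ghdm.natToBits q i) ∪ {Ghdm.leafLeftR h m (Ghdm.natToBits q i)}) →
        ∀ i j : Fin m,
          (∃ v ∈ (P i).support, v ∈ CGT.gBall H {f u} r) →
          (∃ v ∈ (P j).support, v ∈ CGT.gBall H {f u} r) → i = j) := by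
  have hm2 : 2 ≤ m := hm ▸ hn.trans (Nat.le_self_pow two_ne_zero n)
  have hN2 : N < 2 ^ q := hq ▸ Nat.le_pow_clog one_lt_two (N + 1)
  subst hh
  exact statement14_general (Ghdm.largeParameters_of_eq hM hr hd) hm2 hN2 hf
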